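/- arXiv:1404.2671 — 9 statements merged into one kernel-verified Lean document; each statement's English description precedes it below -/
import Mathlib

section
/- Let B = d_1 ≥ d_2 ≥ ⋯ ≥ d_n ≥ d_{n+1} = 0 be breakpoints and α_1,…,α_n reals satisfying α_j·b_j·e^{r_j·d_j/b_j} = α_{j−1}·b_{j−1}·e^{r_{j−1}·d_j/b_{j−1}} for every j = 2,…,n, and let p be the associated piecewise-exponential strategy. Then for every y ∈ (0,B], C(p,y) = y·α_1·b_1·e^{(r_1/b_1)·B}; in particular C(p,y)/(r_1·y) is the constant α_1·(b_1/r_1)·e^{(r_1/b_1)·B}. -/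
open MeasureTheory Set

/-- Cost of the pure action `(j, x)` against nature's stopping time `y`. -/
noncomputable def msrCost (r b x y : ℝ) : ℝ := if y < x then r * y else r * x + b

/-- A mixed strategy of the consumer: a tuple of finite Borel measures on `[0, B]`
(measures on `ℝ` concentrated on `[0, B]`) of total mass `1`. -/
def IsMixed (n : ℕ) (B : ℝ) (μ : ℕ → Measure ℝ) : Prop :=
  (∀ j, IsFiniteMeasure (μ j)) ∧
  (∀ j, μ j (Set.Icc 0 B)ᶜ = 0) ∧
  (∑ j ∈ Finset.range n, (μ j (Set.Icc 0 B)).toReal) = 1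

/-- Expected cost of the mixed strategy `μ` against nature's stopping time `y`. -/
noncomputable def expCost (n : ℕ) (r b : ℕ → ℝ) (μ : ℕ → Measure ℝ) (y : ℝ) : ℝ :=
  ∑ j ∈ Finset.range n, ∫ x, msrCost (r j) (b j) x y ∂(μ j)

/-- Competitive ratio of the mixed strategy `μ`: `sup_{y ∈ (0, B]} C(μ, y) / (r 0 · y)`. -/
noncomputable def ratio (n : ℕ) (r b : ℕ → ℝ) (B : ℝ) (μ : ℕ → Measure ℝ) : ℝ :=
  ⨆ y : Set.Ioc (0 : ℝ) B, expCost n r b μ (y : ℝ) / (r 0 * (y : ℝ))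

/-- A mixed strategy is optimal if its competitive ratio is minimal among all
mixed strategies. -/
def IsOptimal (n : ℕ) (r b : ℕ → ℝ) (B : ℝ) (μ : ℕ → Measure ℝ) : Prop :=
  IsMixed n B μ ∧
  ∀ ν : ℕ → Measure ℝ, IsMixed n B ν → ratio n r b B μ ≤ ratio n r b B ν

/-- Expected cost of a density strategy `p` against stopping time `y`:
`∑ j, (∫_0^y (r j · x + b j)·p j x dx + ∫_y^B r j · y · p j x dx)`. -/
noncomputable def densCost (n : ℕ) (r b : ℕ → ℝ) (B : ℝ) (p : ℕ → ℝ → ℝ) (y : ℝ) : ℝ :=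
  ∑ j ∈ Finset.range n,
    ((∫ x in (0:ℝ)..y, (r j * x + b j) * p j x) + ∫ x in y..B, r j * y * p j x)

/-!
Against nature's stopping time `y`, the function `x ↦ min x y · α b e^{r x / b}` is an
antiderivative, off the point `x = y`, of the pure cost `msrCost r b x y` times the density
`α e^{r x / b}`. So shop `j` contributes the increment of this potential over `[d (j + 1), d j]`;
the matching relations say that the potentials of consecutive shops agree at their common
breakpoint, so the contributions telescope, leaving only the value at `d 0`, since the factor
`min x y` vanishes at `d n = 0`.
-/

theorem pos_of_add_one_le {β : Type*} [Preorder β] [Zero β] {n : ℕ} {f : ℕ → β}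
    (hf : ∀ j, j + 1 < n → f (j + 1) ≤ f j) (h_last : 0 < f (n - 1)) {j : ℕ} (hj : j < n) :
    0 < f j := by
  have h_anti : AntitoneOn f (Iio n) :=
    antitoneOn_of_add_one_le ordConnected_Iio fun j _ _ hj => hf j hj
  exact h_last.trans_le (h_anti hj (Nat.sub_one_lt_of_lt hj) (Nat.le_sub_one_of_lt hj))

section Indicator

variable {E : Type*} [NormedAddCommGroup E] {f : ℝ → E} {a c : ℝ}

theorem intervalIntegrable_indicator {μ : Measure ℝ} {s : Set ℝ} (hf : IntervalIntegrable f μ a c)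
    (hs : MeasurableSet s) : IntervalIntegrable (s.indicator f) μ a c :=
  intervalIntegrable_iff.2 ((intervalIntegrable_iff.1 hf).indicator hs)

theorem integral_indicator_Ioo [NormedSpace ℝ E] {l u : ℝ} (hal : a ≤ l) (hlu : l ≤ u)
    (huc : u ≤ c) : ∫ x in a..c, (Ioo l u).indicator f x = ∫ x in l..u, f x := by
  rw [intervalIntegral.integral_of_le (hal.trans (hlu.trans huc)),
    setIntegral_indicator measurableSet_Ioo,
    inter_eq_right.2 (Ioo_subset_Ioc_self.trans (Ioc_subset_Ioc hal huc)),
    intervalIntegral.integral_of_le hlu, integral_Ioc_eq_integral_Ioo]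

end Indicator

section PureCost

variable {r b α y : ℝ}

theorem intervalIntegrable_msrCost_mul {a c : ℝ} {q : ℝ → ℝ}
    (hq : IntervalIntegrable q volume a c) :
    IntervalIntegrable (fun x => msrCost r b x y * q x) volume a c := by
  have h_rent : IntervalIntegrable (fun x => r * min x y * q x) volume a c :=
    hq.continuousOn_mul (by fun_prop)
  have h_buy : IntervalIntegrable ((Iic y).indicator fun x => b * q x) volume a c :=
    intervalIntegrable_indicator (hq.const_mul b) measurableSet_Iic
  refine (h_rent.add h_buy).congr fun x _ => ?_
  rcases lt_or_ge y x with hyx | hxy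
  · simp [msrCost, hyx, hyx.le]
  · simp [msrCost, hxy, hxy.not_gt, add_mul]

theorem hasDerivAt_min_mul_exp {x : ℝ} (hb : b ≠ 0) (hx : x ≠ y) :
    HasDerivAt (fun x => min x y * (α * b * Real.exp (r * x / b)))
      (msrCost r b x y * (α * Real.exp (r * x / b))) x := by
  have h_exp : HasDerivAt (fun x => α * b * Real.exp (r * x / b))
      (α * r * Real.exp (r * x / b)) x := by
    refine ((((hasDerivAt_id x).const_mul r).div_const b).exp.const_mul (α * b)).congr_deriv ?_
    simp only [id_eq]
    field_simp
  rcases hx.lt_or_gt with hxy | hyx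
  · have h_min : HasDerivAt (fun x => min x y) 1 x :=
      (hasDerivAt_id x).congr_of_eventuallyEq <|
        (eventually_lt_nhds hxy).mono fun _ h => min_eq_left h.le
    refine (h_min.mul h_exp).congr_deriv ?_
    rw [msrCost, if_neg hxy.not_gt, min_eq_left hxy.le]
    ring
  · have h_min : HasDerivAt (fun x => min x y) 0 x :=
      (hasDerivAt_const x y).congr_of_eventuallyEq <|
        (eventually_gt_nhds hyx).mono fun _ h => min_eq_right h.le
    refine (h_min.mul h_exp).congr_deriv ?_
    rw [msrCost, if_pos hyx, min_eq_right hyx.le]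
    ring

theorem integral_msrCost_mul_exp (hb : b ≠ 0) (l u : ℝ) :
    ∫ x in l..u, msrCost r b x y * (α * Real.exp (r * x / b)) =
      min u y * (α * b * Real.exp (r * u / b)) - min l y * (α * b * Real.exp (r * l / b)) :=
  integral_eq_of_hasDerivAt_off_countable (fun x => min x y * (α * b * Real.exp (r * x / b))) _
    (countable_singleton y) (by fun_prop) (fun _ hx => hasDerivAt_min_mul_exp hb hx.2)
    (intervalIntegrable_msrCost_mul (Continuous.intervalIntegrable (by fun_prop) l u))

end PureCost

section Density

variable {n : ℕ} {r b : ℕ → ℝ} {B y : ℝ}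

theorem densCost_eq_sum_integral_msrCost {p : ℕ → ℝ → ℝ}
    (hp : ∀ j < n, IntervalIntegrable (p j) volume 0 B) (hy : y ∈ Icc 0 B) :
    densCost n r b B p y =
      ∑ j ∈ Finset.range n, ∫ x in (0 : ℝ)..B, msrCost (r j) (b j) x y * p j x := by
  refine Finset.sum_congr rfl fun j hj => ?_
  have h_int : IntervalIntegrable (fun x => msrCost (r j) (b j) x y * p j x) volume 0 B :=
    intervalIntegrable_msrCost_mul (hp j (Finset.mem_range.1 hj))
  have hy' : y ∈ uIcc 0 B := Icc_subset_uIcc hy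
  rw [← intervalIntegral.integral_add_adjacent_intervals
    (h_int.mono_set (uIcc_subset_uIcc_left hy')) (h_int.mono_set (uIcc_subset_uIcc_right hy'))]
  congr 1
  · refine intervalIntegral.integral_congr_Ioo_of_le hy.1 fun x hx => ?_
    simp only [msrCost, if_neg hx.2.not_gt]
  · refine intervalIntegral.integral_congr_Ioo_of_le hy.2 fun x hx => ?_
    simp only [msrCost, if_pos hx.1]

/-- The piecewise-exponential strategy with coefficients `α` and breakpoints `d`: shop `j` has
density `α j * exp (r j * x / b j)` on `(d (j + 1), d j)`. Shops are numbered from `0`, so `d j`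
is the paper's `d_{j+1}`. -/
noncomputable def piecewiseExp (r b α d : ℕ → ℝ) (j : ℕ) : ℝ → ℝ :=
  (Ioo (d (j + 1)) (d j)).indicator fun x => α j * Real.exp (r j * x / b j)

variable {α d : ℕ → ℝ}

theorem intervalIntegrable_piecewiseExp (j : ℕ) (a c : ℝ) :
    IntervalIntegrable (piecewiseExp r b α d j) volume a c :=
  intervalIntegrable_indicator (Continuous.intervalIntegrable (by fun_prop) a c) measurableSet_Ioo

theorem integral_msrCost_mul_piecewiseExp {j : ℕ} {a c : ℝ} (hb : b j ≠ 0) (ha : a ≤ d (j + 1))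
    (hd : d (j + 1) ≤ d j) (hc : d j ≤ c) :
    ∫ x in a..c, msrCost (r j) (b j) x y * piecewiseExp r b α d j x =
      min (d j) y * (α j * b j * Real.exp (r j * d j / b j)) -
        min (d (j + 1)) y * (α j * b j * Real.exp (r j * d (j + 1) / b j)) :=
  calc ∫ x in a..c, msrCost (r j) (b j) x y * piecewiseExp r b α d j x
      = ∫ x in a..c, (Ioo (d (j + 1)) (d j)).indicator
          (fun x => msrCost (r j) (b j) x y * (α j * Real.exp (r j * x / b j))) x := by
        simp only [piecewiseExp, indicator_mul_right]
    _ = ∫ x in d (j + 1)..d j, msrCost (r j) (b j) x y * (α j * Real.exp (r j * x / b j)) :=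
        integral_indicator_Ioo ha hd hc
    _ = _ := integral_msrCost_mul_exp hb _ _

theorem densCost_piecewiseExp_eq_sum (hb : ∀ j < n, b j ≠ 0) (hdn : 0 ≤ d n)
    (hd : ∀ j < n, d (j + 1) ≤ d j) (hy : y ∈ Icc 0 (d 0)) :
    densCost n r b (d 0) (piecewiseExp r b α d) y =
      ∑ j ∈ Finset.range n,
        (min (d j) y * (α j * b j * Real.exp (r j * d j / b j)) -
          min (d (j + 1)) y * (α j * b j * Real.exp (r j * d (j + 1) / b j))) := by
  have h_anti : AntitoneOn d (Iic n) :=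
    antitoneOn_of_add_one_le ordConnected_Iic fun j _ _ hj => hd j hj
  rw [densCost_eq_sum_integral_msrCost (fun j _ => intervalIntegrable_piecewiseExp j _ _) hy]
  refine Finset.sum_congr rfl fun j hj => ?_
  have hjn : j < n := Finset.mem_range.1 hj
  have h_nonneg : 0 ≤ d (j + 1) := hdn.trans (h_anti hjn self_mem_Iic hjn)
  have h_le : d j ≤ d 0 := h_anti (Nat.zero_le n) hjn.le (Nat.zero_le j)
  exact integral_msrCost_mul_piecewiseExp (hb j hjn) h_nonneg (hd j hjn) h_le

theorem densCost_piecewiseExp (hb : ∀ j < n, b j ≠ 0) (hdn : d n = 0)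
    (hd : ∀ j < n, d (j + 1) ≤ d j)
    (hα : ∀ j, j + 1 < n →
      α (j + 1) * b (j + 1) * Real.exp (r (j + 1) * d (j + 1) / b (j + 1)) =
        α j * b j * Real.exp (r j * d (j + 1) / b j))
    (hy : y ∈ Icc 0 (d 0)) :
    densCost n r b (d 0) (piecewiseExp r b α d) y =
      y * (α 0 * b 0 * Real.exp (r 0 / b 0 * d 0)) := by
  let potential (j : ℕ) : ℝ := min (d j) y * (α j * b j * Real.exp (r j * d j / b j))
  have h_end : min (d n) y = 0 := by rw [hdn, min_eq_left hy.1]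
  have h_match (j : ℕ) (hj : j < n) :
      min (d (j + 1)) y * (α j * b j * Real.exp (r j * d (j + 1) / b j)) = potential (j + 1) := by
    rcases (Nat.succ_le_of_lt hj).lt_or_eq with hlt | rfl
    · simp only [potential, hα j hlt]
    · simp only [potential, h_end, zero_mul]
  calc densCost n r b (d 0) (piecewiseExp r b α d) y
      = ∑ j ∈ Finset.range n, (potential j - potential (j + 1)) := by
        rw [densCost_piecewiseExp_eq_sum hb hdn.ge hd hy]
        exact Finset.sum_congr rfl fun j hj => by rw [h_match j (Finset.mem_range.1 hj)]
    _ = potential 0 - potential n := Finset.sum_range_sub' potential n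
    _ = y * (α 0 * b 0 * Real.exp (r 0 / b 0 * d 0)) := by
        simp only [potential, h_end, min_eq_right hy.2, zero_mul, sub_zero, div_mul_eq_mul_div]

theorem msr_piecewise_exponential_constant_ratio_general (hr0 : r 0 ≠ 0)
    (hb : ∀ j < n, b j ≠ 0) (hdn : d n = 0) (hd : ∀ j < n, d (j + 1) ≤ d j)
    (hα : ∀ j, j + 1 < n →
      α (j + 1) * b (j + 1) * Real.exp (r (j + 1) * d (j + 1) / b (j + 1)) =
        α j * b j * Real.exp (r j * d (j + 1) / b j))
    (hy : y ∈ Ioc 0 (d 0)) :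
    densCost n r b (d 0) (piecewiseExp r b α d) y =
        y * (α 0 * b 0 * Real.exp (r 0 / b 0 * d 0)) ∧
      densCost n r b (d 0) (piecewiseExp r b α d) y / (r 0 * y) =
        α 0 * (b 0 / r 0) * Real.exp (r 0 / b 0 * d 0) := by
  have h_cost := densCost_piecewiseExp hb hdn hd hα (Ioc_subset_Icc_self hy)
  refine ⟨h_cost, ?_⟩
  rw [h_cost, div_eq_iff (mul_ne_zero hr0 hy.1.ne')]
  field_simp

end Density

/-- for a piecewise-exponential strategy whose coefficients satisfy the
matching relations, the expected cost is linear in y, so the ratio is constant. -/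
theorem msr_piecewise_exponential_constant_ratio
    (n : ℕ) (hn : 0 < n) (r b : ℕ → ℝ)
    (hr0 : 0 < r 0)
    (hrmono : ∀ j, j + 1 < n → r j < r (j + 1))
    (hbmono : ∀ j, j + 1 < n → b (j + 1) < b j)
    (hbn : 0 < b (n - 1))
    (B : ℝ) (hB : B = b (n - 1) / r 0)
    (d α : ℕ → ℝ) (p : ℕ → ℝ → ℝ)
    (hd0 : d 0 = B) (hdn : d n = 0) (hdmono : ∀ j < n, d (j + 1) ≤ d j)
    (hα : ∀ j, 1 ≤ j → j < n →
      α j * b j * Real.exp (r j * d j / b j)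
        = α (j - 1) * b (j - 1) * Real.exp (r (j - 1) * d j / b (j - 1)))
    (hp : ∀ j x, p j x =
      if d (j + 1) < x ∧ x < d j then α j * Real.exp (r j * x / b j) else 0) :
    ∀ y ∈ Set.Ioc (0 : ℝ) B,
      densCost n r b B p y = y * (α 0 * b 0 * Real.exp (r 0 / b 0 * B)) ∧
      densCost n r b B p y / (r 0 * y) = α 0 * (b 0 / r 0) * Real.exp (r 0 / b 0 * B) := by
  obtain rfl : p = piecewiseExp r b α d := by
    ext j x
    simp only [hp, piecewiseExp, indicator, mem_Ioo]
  subst hd0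
  exact fun y => msr_piecewise_exponential_constant_ratio_general hr0.ne'
    (fun j hj => (pos_of_add_one_le (fun k hk => (hbmono k hk).le) hbn hj).ne') hdn hdmono
    (fun j => hα (j + 1) (Nat.succ_pos j))
end

section
/- Let B = d_1 > d_2 > ⋯ > d_n > d_{n+1} = 0 be strictly decreasing breakpoints, let α_1,…,α_n be reals, let p be the associated piecewise-exponential strategy, and suppose there is λ ∈ ℝ with C(p,y) = λ·r_1·y for every y ∈ (0,B]. Then α_j·b_j·e^{r_j·d_j/b_j} = α_{j−1}·b_{j−1}·e^{r_{j−1}·d_j/b_{j−1}} for every j = 2,…,n. -/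
open MeasureTheory Set

/-!
Every summand of the cost is differentiable from each side of `y` at which the densities have
one-sided limits. Since buying at time `y` costs `b k` more than having rented until `y`, its
one-sided derivatives differ only in the term `b k * L k`, where `L k` is the limit of `p k` at `y`
from that side. So a cost that is differentiable at `y` forces `∑ k, b k * L k` to agree on the two
sides. At the breakpoint `d (m + 1)` the only density that
does not vanish on the right is `p m`, and on the left `p (m + 1)`.
-/

open Filter Topology

section OneSidedLimits

theorem nhdsLE_inf_ae_le_nhdsLT {α : Type*} [TopologicalSpace α] [PartialOrder α]
    [MeasurableSpace α] (μ : Measure α) [NullSingletonClass μ] (y : α) :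
    𝓝[≤] y ⊓ ae μ ≤ 𝓝[<] y := by
  have hne : ae μ ≤ 𝓟 {y}ᶜ := le_principal_iff.2 (compl_mem_ae_iff.2 (measure_singleton y))
  calc 𝓝[≤] y ⊓ ae μ ≤ 𝓝[≤] y ⊓ 𝓟 {y}ᶜ := inf_le_inf_left _ hne
    _ = 𝓝[<] y := by
      rw [nhdsWithin, inf_assoc, inf_principal, ← sdiff_eq, Iic_sdiff_right, nhdsWithin]

variable {α β : Type*} [TopologicalSpace α] [LinearOrder α] [OrderTopology α]
  [TopologicalSpace β] [Zero β] {f : α → β} {y : α}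

theorem tendsto_indicator_Ioo_nhdsGT (hf : ContinuousAt f y) (a b : α) :
    Tendsto ((Ioo a b).indicator f) (𝓝[>] y) (𝓝 ((Ico a b).indicator f y)) := by
  by_cases hy : y ∈ Ico a b
  · rw [indicator_of_mem hy]
    refine (hf.mono_left nhdsWithin_le_nhds).congr' ?_
    filter_upwards [Ioo_mem_nhdsGT_of_mem hy] with x hx
    exact (indicator_of_mem hx f).symm
  · rw [indicator_of_notMem hy]
    refine tendsto_const_nhds.congr' ?_
    have hout : ∀ᶠ x in 𝓝[>] y, x ∉ Ioo a b := by
      rcases lt_or_ge y a with hya | hay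
      · filter_upwards [nhdsWithin_le_nhds (Iio_mem_nhds hya)] with x hxa hx
        exact hxa.not_gt hx.1
      · filter_upwards [self_mem_nhdsWithin] with x hyx hx
        exact hy ⟨hay, lt_trans hyx hx.2⟩
    filter_upwards [hout] with x hx
    exact (indicator_of_notMem hx f).symm

theorem tendsto_indicator_Ioo_nhdsLT (hf : ContinuousAt f y) (a b : α) :
    Tendsto ((Ioo a b).indicator f) (𝓝[<] y) (𝓝 ((Ioc a b).indicator f y)) := by
  have h := tendsto_indicator_Ioo_nhdsGT (α := αᵒᵈ) (f := f) (y := y) hf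
    (OrderDual.toDual b) (OrderDual.toDual a)
  rwa [Ioo_toDual, Ico_toDual] at h

end OneSidedLimits

section Breakpoints

variable {β : Type*} [Preorder β] {d : ℕ → β} {n m k : ℕ}

theorem mem_Ico_succ_iff_of_strictAntiOn (hd : StrictAntiOn d (Iic n)) (hm : m < n)
    (hk : k < n) : d (m + 1) ∈ Ico (d (k + 1)) (d k) ↔ k = m := by
  rw [mem_Ico, hd.le_iff_ge (mem_Iic.2 hk) (mem_Iic.2 hm),
    hd.lt_iff_gt (mem_Iic.2 hm) (mem_Iic.2 hk.le)]
  lia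

theorem mem_Ioc_succ_iff_of_strictAntiOn (hd : StrictAntiOn d (Iic n)) (hm : m ≤ n)
    (hk : k < n) : d m ∈ Ioc (d (k + 1)) (d k) ↔ k = m := by
  rw [mem_Ioc, hd.lt_iff_gt (mem_Iic.2 hk) (mem_Iic.2 hm),
    hd.le_iff_ge (mem_Iic.2 hm) (mem_Iic.2 hk.le)]
  lia

variable {R : Type*} [NonUnitalNonAssocSemiring R]

theorem sum_mul_indicator_Ico_succ_of_strictAntiOn (hd : StrictAntiOn d (Iic n)) (hm : m < n)
    (c : ℕ → R) (f : ℕ → β → R) :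
    ∑ k ∈ Finset.range n, c k * (Ico (d (k + 1)) (d k)).indicator (f k) (d (m + 1)) =
      c m * f m (d (m + 1)) := by
  rw [Finset.sum_eq_single_of_mem m (Finset.mem_range.2 hm),
    indicator_of_mem ((mem_Ico_succ_iff_of_strictAntiOn hd hm hm).2 rfl)]
  intro k hk hkm
  have hout := mt (mem_Ico_succ_iff_of_strictAntiOn hd hm (Finset.mem_range.1 hk)).1 hkm
  rw [indicator_of_notMem hout, mul_zero]

theorem sum_mul_indicator_Ioc_succ_of_strictAntiOn (hd : StrictAntiOn d (Iic n)) (hm : m < n)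
    (c : ℕ → R) (f : ℕ → β → R) :
    ∑ k ∈ Finset.range n, c k * (Ioc (d (k + 1)) (d k)).indicator (f k) (d m) =
      c m * f m (d m) := by
  rw [Finset.sum_eq_single_of_mem m (Finset.mem_range.2 hm),
    indicator_of_mem ((mem_Ioc_succ_iff_of_strictAntiOn hd hm.le hm).2 rfl)]
  intro k hk hkm
  have hout := mt (mem_Ioc_succ_iff_of_strictAntiOn hd hm.le (Finset.mem_range.1 hk)).1 hkm
  rw [indicator_of_notMem hout, mul_zero]

end Breakpoints

section Cost

variable {n : ℕ} {r b : ℕ → ℝ} {B y : ℝ} {p : ℕ → ℝ → ℝ}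

theorem hasDerivWithinAt_integral_mul_add_integral_mul {buy rent q : ℝ → ℝ} {a c L rent' : ℝ}
    {s t : Set ℝ} [intervalIntegral.FTCFilter y (𝓝[s] y) (𝓝[t] y)] (hq : LocallyIntegrable q)
    (hL : Tendsto q (𝓝[t] y ⊓ ae volume) (𝓝 L)) (hbuy : Continuous buy)
    (hrent : HasDerivWithinAt rent rent' s y) :
    HasDerivWithinAt (fun z ↦ (∫ x in a..z, buy x * q x) + ∫ x in z..c, rent z * q x)
      ((buy y - rent y) * L + rent' * ∫ x in y..c, q x) s y := by
  have hqi (u v : ℝ) : IntervalIntegrable q volume u v :=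
    (hq.integrableOn_isCompact isCompact_uIcc).intervalIntegrable
  have hbuyL : Tendsto buy (𝓝[t] y ⊓ ae volume) (𝓝 (buy y)) :=
    (hbuy.tendsto y).mono_left (inf_le_left.trans nhdsWithin_le_nhds)
  have hbought : HasDerivWithinAt (fun z ↦ ∫ x in a..z, buy x * q x) (buy y * L) s y :=
    intervalIntegral.integral_hasDerivWithinAt_of_tendsto_ae_right
      ((hqi a y).continuousOn_mul hbuy.continuousOn)
      (hbuy.aestronglyMeasurable.mul hq.aestronglyMeasurable).stronglyMeasurableAtFilter
      (hbuyL.mul hL)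
  have htail : HasDerivWithinAt (fun z ↦ ∫ x in z..c, q x) (-L) s y :=
    intervalIntegral.integral_hasDerivWithinAt_of_tendsto_ae_left (hqi y c)
      hq.aestronglyMeasurable.stronglyMeasurableAtFilter hL
  simp only [intervalIntegral.integral_const_mul]
  exact (hbought.fun_add (hrent.fun_mul htail)).congr_deriv (by ring)

theorem hasDerivWithinAt_densCost {L : ℕ → ℝ} {s t : Set ℝ}
    [intervalIntegral.FTCFilter y (𝓝[s] y) (𝓝[t] y)] (hp : ∀ k < n, LocallyIntegrable (p k))
    (hL : ∀ k < n, Tendsto (p k) (𝓝[t] y ⊓ ae volume) (𝓝 (L k))) :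
    HasDerivWithinAt (densCost n r b B p)
      (∑ k ∈ Finset.range n, b k * L k + ∑ k ∈ Finset.range n, r k * ∫ x in y..B, p k x) s y := by
  rw [← Finset.sum_add_distrib]
  refine HasDerivWithinAt.fun_sum fun k hk ↦ ?_
  rw [Finset.mem_range] at hk
  have hrent : HasDerivWithinAt (fun z ↦ r k * z) (r k) s y :=
    (hasDerivAt_const_mul (r k)).hasDerivWithinAt
  have hbuy : Continuous fun x ↦ r k * x + b k := by fun_prop
  simpa only [add_sub_cancel_left] using
    hasDerivWithinAt_integral_mul_add_integral_mul (hp k hk) (hL k hk) hbuy hrent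

theorem sum_mul_left_eq_sum_mul_right_of_differentiableAt_densCost {L R : ℕ → ℝ}
    (hp : ∀ k < n, LocallyIntegrable (p k))
    (hL : ∀ k < n, Tendsto (p k) (𝓝[<] y) (𝓝 (L k)))
    (hR : ∀ k < n, Tendsto (p k) (𝓝[>] y) (𝓝 (R k)))
    (hC : DifferentiableAt ℝ (densCost n r b B p) y) :
    ∑ k ∈ Finset.range n, b k * L k = ∑ k ∈ Finset.range n, b k * R k := by
  have hleft := (uniqueDiffOn_Iic y y self_mem_Iic).eq_deriv _ hC.hasDerivAt.hasDerivWithinAt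
    (hasDerivWithinAt_densCost hp fun k hk ↦
      (hL k hk).mono_left (nhdsLE_inf_ae_le_nhdsLT volume y))
  have hright := (uniqueDiffOn_Ici y y self_mem_Ici).eq_deriv _ hC.hasDerivAt.hasDerivWithinAt
    (hasDerivWithinAt_densCost hp fun k hk ↦ (hR k hk).mono_left inf_le_left)
  exact add_right_cancel (hleft.symm.trans hright)

end Cost

section Piecewise

/-- The strategy whose density for shop `k` is `f k` on the interval `(d (k + 1), d k)` between
consecutive (decreasing) breakpoints and `0` elsewhere; the piecewise-exponential strategies are
those with `f k x = α k * exp (r k * x / b k)`. -/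
noncomputable def piecewiseStrategy (d : ℕ → ℝ) (f : ℕ → ℝ → ℝ) (k : ℕ) : ℝ → ℝ :=
  (Ioo (d (k + 1)) (d k)).indicator (f k)

variable {n m : ℕ} {r b d : ℕ → ℝ} {B : ℝ} {f : ℕ → ℝ → ℝ}

theorem msr_alpha_relation_general (hd : StrictAntiOn d (Iic n)) (hf : ∀ k < n, Continuous (f k))
    (hm : m + 1 < n)
    (hC : DifferentiableAt ℝ (densCost n r b B (piecewiseStrategy d f)) (d (m + 1))) :
    b (m + 1) * f (m + 1) (d (m + 1)) = b m * f m (d (m + 1)) := by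
  have hsum := sum_mul_left_eq_sum_mul_right_of_differentiableAt_densCost
    (fun k hk ↦ (hf k hk).locallyIntegrable.indicator measurableSet_Ioo)
    (fun k hk ↦ tendsto_indicator_Ioo_nhdsLT (hf k hk).continuousAt (d (k + 1)) (d k))
    (fun k hk ↦ tendsto_indicator_Ioo_nhdsGT (hf k hk).continuousAt (d (k + 1)) (d k)) hC
  rwa [sum_mul_indicator_Ioc_succ_of_strictAntiOn hd hm,
    sum_mul_indicator_Ico_succ_of_strictAntiOn hd (m.lt_succ_self.trans hm)] at hsum

end Piecewise

/-- if a piecewise-exponential strategy with strictly decreasing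
breakpoints has expected cost λ·r₁·y for all y ∈ (0,B], then the coefficients
satisfy the matching relations. -/
theorem msr_alpha_relation
    (n : ℕ) (hn : 0 < n) (r b : ℕ → ℝ)
    (hr0 : 0 < r 0)
    (hrmono : ∀ j, j + 1 < n → r j < r (j + 1))
    (hbmono : ∀ j, j + 1 < n → b (j + 1) < b j)
    (hbn : 0 < b (n - 1))
    (B : ℝ) (hB : B = b (n - 1) / r 0)
    (d α : ℕ → ℝ) (p : ℕ → ℝ → ℝ) (lam : ℝ)
    (hd0 : d 0 = B) (hdn : d n = 0) (hdmono : ∀ j < n, d (j + 1) < d j)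
    (hp : ∀ j x, p j x =
      if d (j + 1) < x ∧ x < d j then α j * Real.exp (r j * x / b j) else 0)
    (hC : ∀ y ∈ Set.Ioc (0 : ℝ) B, densCost n r b B p y = lam * (r 0 * y)) :
    ∀ j, 1 ≤ j → j < n →
      α j * b j * Real.exp (r j * d j / b j)
        = α (j - 1) * b (j - 1) * Real.exp (r (j - 1) * d j / b (j - 1)) := by
  rintro (_ | m) hj hjn
  · contradiction
  have hd : StrictAntiOn d (Iic n) := strictAntiOn_Iic_of_succ_lt hdmono
  have hp' : p = piecewiseStrategy d fun k x ↦ α k * Real.exp (r k * x / b k) := by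
    ext k x
    simp only [hp, piecewiseStrategy, indicator_apply, mem_Ioo]
  have hpos : 0 < d (m + 1) := hdn ▸ hd hjn.le self_mem_Iic hjn
  have hlt : d (m + 1) < B := hd0 ▸ hd (Nat.zero_le n) hjn.le m.succ_pos
  have hC' : DifferentiableAt ℝ (densCost n r b B p) (d (m + 1)) := by
    have hlin : DifferentiableAt ℝ (fun y ↦ lam * (r 0 * y)) (d (m + 1)) := by fun_prop
    exact hlin.congr_of_eventuallyEq (eventually_of_mem (Ioc_mem_nhds hpos hlt) hC)
  have hmatch := msr_alpha_relation_general hd (fun k _ ↦ by fun_prop) hjn (hp' ▸ hC')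
  rw [add_tsub_cancel_right]
  linear_combination hmatch
end

section
/- Let 0 < r_{n−1} < r_n, b_{n−1} > b_n > 0, α_{n−1} > 0 and d_{n−1} ∈ ℝ. Define α_n(d) = α_{n−1}·(b_{n−1}/b_n)·e^{(r_{n−1}/b_{n−1} − r_n/b_n)·d} and P_{n−1}(d) = α_n(d)·∫_0^d e^{r_n·x/b_n} dx + α_{n−1}·∫_d^{d_{n−1}} e^{r_{n−1}·x/b_{n−1}} dx. Then P_{n−1} is strictly concave on ℝ. -/
/-!
The relation defining `αₙ` cancels the growth of the integral over `[0, d]`, so the objective is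
a constant plus a combination of `exp (r₁ / b₁ * d)` and `exp ((r₁ / b₁ - r₂ / b₂) * d)`.
The coefficient of the first is `α b₁ (1 / r₂ - 1 / r₁)`, negative because shop `n` rents at the
higher rate, and that of the second is `-α b₁ / r₂ < 0`.
-/

open Real Set

section StrictConvexOn

variable {𝕜 E F β : Type*}

lemma strictConvexOn_comp_linearMap [Semiring 𝕜] [PartialOrder 𝕜]
    [AddCommMonoid E] [AddCommMonoid F] [AddCommMonoid β] [PartialOrder β]
    [Module 𝕜 E] [Module 𝕜 F] [SMul 𝕜 β] {f : F → β} {s : Set F}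
    (hf : StrictConvexOn 𝕜 s f) (g : E →ₗ[𝕜] F) (hg : Function.Injective g) :
    StrictConvexOn 𝕜 (g ⁻¹' s) (f ∘ g) := by
  refine ⟨hf.1.linear_preimage g, fun x hx y hy hxy a b ha hb hab => ?_⟩
  simpa only [Function.comp_apply, map_add, map_smul] using
    hf.2 hx hy (hg.ne hxy) ha hb hab

lemma strictConvexOn_smul [CommSemiring 𝕜] [PartialOrder 𝕜]
    [AddCommMonoid E] [AddCommMonoid β] [PartialOrder β] [SMul 𝕜 E] [Module 𝕜 β]
    [PosSMulStrictMono 𝕜 β] {f : E → β} {s : Set E} {c : 𝕜}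
    (hc : 0 < c) (hf : StrictConvexOn 𝕜 s f) : StrictConvexOn 𝕜 s (fun x => c • f x) := by
  refine ⟨hf.1, fun x hx y hy hxy a b ha hb hab => ?_⟩
  calc
    c • f (a • x + b • y) < c • (a • f x + b • f y) :=
      smul_lt_smul_of_pos_left (hf.2 hx hy hxy ha hb hab) hc
    _ = a • c • f x + b • c • f y := by rw [smul_add, smul_comm c, smul_comm c]

end StrictConvexOn

lemma convexOn_exp_const_mul (c : ℝ) : ConvexOn ℝ univ (fun x : ℝ => exp (c * x)) :=
  convexOn_exp.comp_linearMap (LinearMap.mulLeft ℝ c)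

lemma strictConvexOn_exp_const_mul {c : ℝ} (hc : c ≠ 0) :
    StrictConvexOn ℝ univ (fun x : ℝ => exp (c * x)) :=
  strictConvexOn_comp_linearMap strictConvexOn_exp (LinearMap.mulLeft ℝ c)
    (mul_right_injective₀ hc)

lemma integral_exp_mul_div {r b : ℝ} (hr : r ≠ 0) (hb : b ≠ 0) (u v : ℝ) :
    ∫ x in u..v, exp (r * x / b) = b / r * (exp (r / b * v) - exp (r / b * u)) := by
  simp only [mul_div_right_comm r _ b]
  rw [intervalIntegral.integral_comp_mul_left exp (div_ne_zero hr hb), integral_exp, inv_div,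
    smul_eq_mul]

/-- The constant `αₙ(d)` of the last shop, solved from the relation
`αₙ * bₙ * exp (rₙ / bₙ * d) = αₙ₋₁ * bₙ₋₁ * exp (rₙ₋₁ / bₙ₋₁ * d)`. Index `1` stands for shop
`n - 1`, index `2` for shop `n`, and `alpha` for `αₙ₋₁`. -/
noncomputable def lastCoeff (r1 r2 b1 b2 alpha d : ℝ) : ℝ :=
  alpha * (b1 / b2) * exp ((r1 / b1 - r2 / b2) * d)

/-- The objective `Pₙ₋₁(d)` from which the last breakpoint `dₙ` is computed, with `dprev` for
`dₙ₋₁`. -/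
noncomputable def dnObjective (r1 r2 b1 b2 alpha dprev d : ℝ) : ℝ :=
  lastCoeff r1 r2 b1 b2 alpha d * (∫ x in (0 : ℝ)..d, exp (r2 * x / b2))
    + alpha * ∫ x in d..dprev, exp (r1 * x / b1)

section Objective

variable {r1 r2 b1 b2 : ℝ}

lemma lastCoeff_mul_exp (r1 r2 b1 b2 alpha d : ℝ) :
    lastCoeff r1 r2 b1 b2 alpha d * exp (r2 / b2 * d) =
      alpha * (b1 / b2) * exp (r1 / b1 * d) := by
  rw [lastCoeff, mul_assoc, ← exp_add, ← add_mul, sub_add_cancel]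

lemma lastCoeff_mul_integral (hr2 : r2 ≠ 0) (hb2 : b2 ≠ 0) (alpha d : ℝ) :
    lastCoeff r1 r2 b1 b2 alpha d * (∫ x in (0 : ℝ)..d, exp (r2 * x / b2)) =
      alpha * (b1 / r2) * (exp (r1 / b1 * d) - exp ((r1 / b1 - r2 / b2) * d)) := by
  calc
    _ = b2 / r2 * (lastCoeff r1 r2 b1 b2 alpha d * exp (r2 / b2 * d)
          - lastCoeff r1 r2 b1 b2 alpha d) := by
      rw [integral_exp_mul_div hr2 hb2, mul_zero, exp_zero]
      ring
    _ = _ := by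
      rw [lastCoeff_mul_exp, lastCoeff]
      field_simp

lemma dnObjective_eq_const_sub_exp (hr1 : r1 ≠ 0) (hr2 : r2 ≠ 0) (hb1 : b1 ≠ 0) (hb2 : b2 ≠ 0)
    (alpha dprev d : ℝ) :
    dnObjective r1 r2 b1 b2 alpha dprev d =
      alpha * (b1 / r1) * exp (r1 / b1 * dprev)
        - (alpha * (b1 / r1 - b1 / r2) * exp (r1 / b1 * d)
          + alpha * (b1 / r2) * exp ((r1 / b1 - r2 / b2) * d)) := by
  rw [dnObjective, lastCoeff_mul_integral hr2 hb2, integral_exp_mul_div hr1 hb1]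
  ring

end Objective

theorem dn_objective_strictly_concave_general {r1 r2 b1 b2 alpha : ℝ} (dprev : ℝ)
    (hr1 : 0 < r1) (hr12 : r1 < r2) (hb1 : 0 < b1) (hb2 : b2 ≠ 0) (halpha : 0 < alpha) :
    StrictConcaveOn ℝ univ (dnObjective r1 r2 b1 b2 alpha dprev) := by
  have hr2 : 0 < r2 := hr1.trans hr12
  have hA : 0 < alpha * (b1 / r1 - b1 / r2) :=
    mul_pos halpha (sub_pos.2 (div_lt_div_of_pos_left hb1 hr1 hr12))
  have hB : 0 ≤ alpha * (b1 / r2) := by positivity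
  have hconvex := (strictConvexOn_smul hA
    (strictConvexOn_exp_const_mul (div_pos hr1 hb1).ne')).add_convexOn
      ((convexOn_exp_const_mul (r1 / b1 - r2 / b2)).smul hB)
  exact ((concaveOn_const _ convex_univ).sub_strictConvexOn hconvex).congr fun d _ =>
    (dnObjective_eq_const_sub_exp hr1.ne' hr2.ne' hb1.ne' hb2 alpha dprev d).symm

/-- the objective `P_{n-1}(d)` arising in the computation of the last
breakpoint `d_n` is strictly concave, where
`αₙ(d) = α_{n-1}·(b_{n-1}/b_n)·exp((r_{n-1}/b_{n-1} − r_n/b_n)·d)` and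
`P_{n-1}(d) = αₙ(d)·∫_0^d exp(r_n·x/b_n) dx + α_{n-1}·∫_d^{d_{n-1}} exp(r_{n-1}·x/b_{n-1}) dx`. -/
theorem dn_objective_strictly_concave
    (r1 r2 b1 b2 alpha dprev : ℝ)
    (hr1 : 0 < r1) (hr12 : r1 < r2) (hb2 : 0 < b2) (hb12 : b2 < b1)
    (halpha : 0 < alpha) :
    StrictConcaveOn ℝ Set.univ (fun d : ℝ =>
      alpha * (b1 / b2) * Real.exp ((r1 / b1 - r2 / b2) * d)
          * (∫ x in (0:ℝ)..d, Real.exp (r2 * x / b2))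
        + alpha * ∫ x in d..dprev, Real.exp (r1 * x / b1)) :=
  dn_objective_strictly_concave_general dprev hr1 hr12 (hb2.trans hb12) hb2.ne' halpha
end

section
/- Let 0 < r_{j−1} < r_j, b_{j−1} > b_j > 0, α_{j−1} > 0, D ≥ 0 and d_{j−1} ∈ ℝ. Define α_j(d) = α_{j−1}·(b_{j−1}/b_j)·e^{(r_{j−1}/b_{j−1} − r_j/b_j)·d} and P_{j−1}(d) = α_j(d)·( D + ∫_0^d e^{r_j·x/b_j} dx ) + α_{j−1}·∫_d^{d_{j−1}} e^{r_{j−1}·x/b_{j−1}} dx. If D·r_j/b_j ≥ 1, then the derivative of P_{j−1} is strictly negative at every d ∈ ℝ (so P_{j−1} is strictly decreasing); if D·r_j/b_j < 1, then P_{j−1} is strictly concave on ℝ. -/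
/-!
Put `p = r_{j-1}/b_{j-1}` and `q = r_j/b_j`. Evaluating the first integral of `P_{j-1}` leaves only
two exponentials in its derivative,
`P'(d) = k (q - p) (1 - D q) / q · e^{(p - q) d} + (k p - α q) / q · e^{p d}`
with `k = α b_{j-1}/b_j`. The second coefficient equals `α (r_{j-1}/r_j - 1)` and is negative. If
`D q ≥ 1` and `p ≤ q`, the first one is nonpositive, so `P' < 0`. If `D q ≤ 1`, differentiating the
first term brings down the factor `p - q`, which turns its sign into that of `-(q - p)²`, so both
terms of `P'` decrease.
-/

open Real

/-- The objective `P_{j-1}` in terms of the rates `p = r_{j-1}/b_{j-1}`, `q = r_j/b_j` and the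
scale `k = α_{j-1} b_{j-1}/b_j`, so that `α_j(d) = k e^{(p - q) d}`; the endpoint `e` is `d_{j-1}`.
Here `k` and `α` are kept as independent parameters. -/
noncomputable def breakpointObjective (k α p q D e d : ℝ) : ℝ :=
  k * exp ((p - q) * d) * (D + ∫ x in (0 : ℝ)..d, exp (q * x)) + α * ∫ x in d..e, exp (p * x)

theorem hasDerivAt_exp_const_mul (c x : ℝ) :
    HasDerivAt (fun y ↦ exp (c * y)) (c * exp (c * x)) x := by
  simpa [mul_comm] using ((hasDerivAt_id x).const_mul c).exp

theorem integral_exp_const_mul {c : ℝ} (hc : c ≠ 0) (u v : ℝ) :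
    ∫ x in u..v, exp (c * x) = (exp (c * v) - exp (c * u)) / c := by
  rw [intervalIntegral.integral_comp_mul_left exp hc, integral_exp, smul_eq_mul, inv_mul_eq_div]

theorem strictAnti_add_exp_const_mul {a b s t : ℝ} (has : a * s ≤ 0) (hbt : b * t < 0) :
    StrictAnti fun x ↦ a * exp (s * x) + b * exp (t * x) := by
  refine strictAnti_of_hasDerivAt_neg (fun x ↦
    ((hasDerivAt_exp_const_mul s x).const_mul a).add
      ((hasDerivAt_exp_const_mul t x).const_mul b)) fun x ↦ ?_
  rw [← mul_assoc, ← mul_assoc]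
  exact add_neg_of_nonpos_of_neg (mul_nonpos_of_nonpos_of_nonneg has (exp_pos _).le)
    (mul_neg_of_neg_of_pos hbt (exp_pos _))

namespace breakpointObjective

variable {k α p q D : ℝ}

theorem hasDerivAt (hq : q ≠ 0) (e d : ℝ) :
    HasDerivAt (breakpointObjective k α p q D e)
      (k * (q - p) * (1 - D * q) / q * exp ((p - q) * d)
        + (k * p - α * q) / q * exp (p * d)) d := by
  have hcont (c : ℝ) : Continuous fun x ↦ exp (c * x) := by fun_prop
  have hscale := (hasDerivAt_exp_const_mul (p - q) d).const_mul k
  have hrent := ((hcont q).integral_hasStrictDerivAt 0 d).hasDerivAt.const_add D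
  have hprev := (intervalIntegral.integral_hasDerivAt_left ((hcont p).intervalIntegrable d e)
    ((hcont p).stronglyMeasurableAtFilter _ _) (hcont p).continuousAt).const_mul α
  have hexp : exp (p * d) = exp ((p - q) * d) * exp (q * d) := by
    rw [← exp_add]
    ring_nf
  refine ((hscale.mul hrent).add hprev).congr_deriv ?_
  rw [integral_exp_const_mul hq, hexp, mul_zero, exp_zero]
  field_simp
  ring

theorem deriv_neg (hk : 0 ≤ k) (hq : 0 < q) (hpq : p ≤ q) (hkα : k * p < α * q)
    (hD : 1 ≤ D * q) (e d : ℝ) : deriv (breakpointObjective k α p q D e) d < 0 := by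
  rw [(hasDerivAt hq.ne' e d).deriv]
  have hleft : k * (q - p) * (1 - D * q) / q ≤ 0 :=
    div_nonpos_of_nonpos_of_nonneg
      (mul_nonpos_of_nonneg_of_nonpos (mul_nonneg hk (sub_nonneg.2 hpq)) (sub_nonpos.2 hD)) hq.le
  have hright : (k * p - α * q) / q < 0 := div_neg_of_neg_of_pos (sub_neg.2 hkα) hq
  exact add_neg_of_nonpos_of_neg (mul_nonpos_of_nonpos_of_nonneg hleft (exp_pos _).le)
    (mul_neg_of_neg_of_pos hright (exp_pos _))

theorem strictConcaveOn (hk : 0 ≤ k) (hp : 0 < p) (hq : 0 < q) (hkα : k * p < α * q)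
    (hD : D * q ≤ 1) (e : ℝ) :
    StrictConcaveOn ℝ Set.univ (breakpointObjective k α p q D e) := by
  refine StrictAnti.strictConcaveOn_univ_of_deriv
    (continuous_iff_continuousAt.2 fun d ↦ (hasDerivAt hq.ne' e d).continuousAt) ?_
  rw [deriv_eq fun d ↦ hasDerivAt hq.ne' e d]
  refine strictAnti_add_exp_const_mul ?_
    (mul_neg_of_neg_of_pos (div_neg_of_neg_of_pos (sub_neg.2 hkα) hq) hp)
  calc k * (q - p) * (1 - D * q) / q * (p - q) = -(k * (q - p) ^ 2 * (1 - D * q) / q) := by ring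
    _ ≤ 0 := neg_nonpos.2 <|
      div_nonneg (mul_nonneg (mul_nonneg hk (sq_nonneg _)) (sub_nonneg.2 hD)) hq.le

end breakpointObjective

theorem dj_objective_quasiconcave_general
    (r1 r2 b1 b2 alpha D dprev : ℝ)
    (hr1 : 0 < r1) (hr12 : r1 < r2) (hb1 : 0 < b1) (hb2 : 0 < b2) (halpha : 0 < alpha)
    (P : ℝ → ℝ)
    (hP : ∀ d, P d =
      alpha * (b1 / b2) * exp ((r1 / b1 - r2 / b2) * d)
          * (D + ∫ x in (0 : ℝ)..d, exp (r2 * x / b2))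
        + alpha * ∫ x in d..dprev, exp (r1 * x / b1)) :
    (r1 / b1 ≤ r2 / b2 → 1 ≤ D * r2 / b2 → (∀ d : ℝ, deriv P d < 0) ∧ StrictAnti P) ∧
    (D * r2 / b2 ≤ 1 → StrictConcaveOn ℝ Set.univ P) := by
  have hPeq : P = breakpointObjective (alpha * (b1 / b2)) alpha (r1 / b1) (r2 / b2) D dprev := by
    funext d
    simp only [hP, breakpointObjective, mul_div_right_comm]
  have hk : 0 ≤ alpha * (b1 / b2) := by positivity
  have hp : 0 < r1 / b1 := div_pos hr1 hb1
  have hq : 0 < r2 / b2 := div_pos (hr1.trans hr12) hb2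
  have hkα : alpha * (b1 / b2) * (r1 / b1) < alpha * (r2 / b2) := by
    rw [mul_assoc, mul_comm (b1 / b2), div_mul_div_cancel₀ hb1.ne']
    gcongr
  rw [hPeq, mul_div_assoc]
  refine ⟨fun hpq hD ↦ ?_, fun hD ↦ breakpointObjective.strictConcaveOn hk hp hq hkα hD dprev⟩
  have hneg := breakpointObjective.deriv_neg hk hq hpq hkα hD dprev
  exact ⟨hneg, strictAnti_of_deriv_neg hneg⟩

/-- the objective `P_{j-1}(d)` arising in the computation of the
breakpoint `d_j`, with accumulated constant `D ≥ 0`, is strictly decreasing (with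
strictly negative derivative everywhere) when `D·r_j/b_j ≥ 1`, and strictly concave
when `D·r_j/b_j < 1`. Here `r1 = r_{j-1} < r_j = r2`, `b1 = b_{j-1} > b_j = b2`. -/
theorem dj_objective_quasiconcave
    (r1 r2 b1 b2 alpha D dprev : ℝ)
    (hr1 : 0 < r1) (hr12 : r1 < r2) (hb2 : 0 < b2) (hb12 : b2 < b1)
    (halpha : 0 < alpha) (hD : 0 ≤ D)
    (P : ℝ → ℝ)
    (hP : ∀ d, P d =
      alpha * (b1 / b2) * Real.exp ((r1 / b1 - r2 / b2) * d)
          * (D + ∫ x in (0:ℝ)..d, Real.exp (r2 * x / b2))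
        + alpha * ∫ x in d..dprev, Real.exp (r1 * x / b1)) :
    (1 ≤ D * r2 / b2 → (∀ d : ℝ, deriv P d < 0) ∧ StrictAnti P) ∧
    (D * r2 / b2 < 1 → StrictConcaveOn ℝ Set.univ P) := by
  obtain ⟨hanti, hconcave⟩ := dj_objective_quasiconcave_general r1 r2 b1 b2 alpha D dprev
    hr1 hr12 (hb2.trans hb12) hb2 halpha P hP
  exact ⟨hanti (div_le_div₀ (hr1.trans hr12).le hr12.le hb2 hb12.le), fun h ↦ hconcave h.le⟩
end

section
/- Let μ be a mixed strategy for MSR, let y_0 ∈ (0,B] and let δ ∈ (0, y_0). If λ_μ(y) > λ_μ(y_0) for every y ∈ (y_0−δ, y_0), then there exists a shop j with μ_j((y_0−δ, y_0]) > 0. -/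
open MeasureTheory Set

/-- `λ_μ(y)`: the gap between the worst-case ratio of `μ` and its ratio at `y`. -/
noncomputable def lamGap (n : ℕ) (r b : ℕ → ℝ) (B : ℝ) (μ : ℕ → Measure ℝ) (y : ℝ) : ℝ :=
  (⨆ t : Set.Ioc (0 : ℝ) B, expCost n r b μ (t : ℝ) / (r 0 * (t : ℝ)))
    - expCost n r b μ y / (r 0 * y)

/-!
For a pure action `(j, x)` the average cost `c_j(x, y) / y` equals the constant `r_j` before the
purchase and is `(r_j x + b_j) / y`, decreasing in `y`, from the purchase on: it increases only at
the jump `y = x`. Averaging over `μ`, the ratio `C(μ, y) / (r_1 y)`, where `r_1` is `r 0` below,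
cannot increase from `y` to `z` unless some shop puts mass on the buying times in `(y, z]`.
-/

theorem msrCost_of_lt {r b x y : ℝ} (h : y < x) : msrCost r b x y = r * y := if_pos h

theorem msrCost_of_le {r b x y : ℝ} (h : x ≤ y) : msrCost r b x y = r * x + b := if_neg h.not_gt

theorem msrCost_div_le_of_notMem_Ioc {r b x y z : ℝ} (hy : 0 < y) (hyz : y ≤ z)
    (hx : x ∉ Ioc y z) (hbuy : 0 ≤ r * x + b) :
    msrCost r b x z / z ≤ msrCost r b x y / y := by
  rcases lt_or_ge z x with hzx | hxz
  · rw [msrCost_of_lt hzx, msrCost_of_lt (hyz.trans_lt hzx),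
      mul_div_cancel_right₀ _ (hy.trans_le hyz).ne', mul_div_cancel_right₀ _ hy.ne']
  · have hxy : x ≤ y := not_lt.mp fun hyx => hx ⟨hyx, hxz⟩
    rw [msrCost_of_le hxz, msrCost_of_le hxy]
    exact div_le_div_of_nonneg_left hbuy hy hyz

theorem measurable_msrCost (r b y : ℝ) : Measurable fun x => msrCost r b x y :=
  Measurable.ite measurableSet_Ioi measurable_const (by fun_prop)

theorem abs_msrCost_le (r b y : ℝ) {x : ℝ} (hx : 0 ≤ x) :
    |msrCost r b x y| ≤ |r| * |y| + |b| := by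
  rcases lt_or_ge y x with hyx | hxy
  · rw [msrCost_of_lt hyx, abs_mul]
    exact le_add_of_nonneg_right (abs_nonneg b)
  · rw [msrCost_of_le hxy]
    calc |r * x + b| ≤ |r| * |x| + |b| := abs_mul r x ▸ abs_add_le (r * x) b
      _ ≤ |r| * |y| + |b| := by gcongr

theorem integrable_msrCost (r b y : ℝ) {ν : Measure ℝ} [IsFiniteMeasure ν]
    (hν : ∀ᵐ x ∂ν, 0 ≤ x) : Integrable (fun x => msrCost r b x y) ν :=
  .of_bound (measurable_msrCost r b y).aestronglyMeasurable (|r| * |y| + |b|)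
    (hν.mono fun _ hx => abs_msrCost_le r b y hx)

theorem integral_msrCost_div_le {r b y z : ℝ} {ν : Measure ℝ} [IsFiniteMeasure ν]
    (hr : 0 ≤ r) (hb : 0 ≤ b) (hν : ∀ᵐ x ∂ν, 0 ≤ x) (hy : 0 < y) (hyz : y ≤ z)
    (hnull : ν (Ioc y z) = 0) :
    (∫ x, msrCost r b x z ∂ν) / z ≤ (∫ x, msrCost r b x y ∂ν) / y := by
  rw [← integral_div, ← integral_div]
  refine integral_mono_ae ((integrable_msrCost r b z hν).div_const z)
    ((integrable_msrCost r b y hν).div_const y) ?_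
  filter_upwards [hν, measure_eq_zero_iff_ae_notMem.mp hnull] with x hx hxyz
  exact msrCost_div_le_of_notMem_Ioc hy hyz hxyz (by positivity)

theorem expCost_div_le {n : ℕ} {r b : ℕ → ℝ} {μ : ℕ → Measure ℝ} {y z : ℝ}
    (hr : ∀ j < n, 0 ≤ r j) (hb : ∀ j < n, 0 ≤ b j) (hfin : ∀ j < n, IsFiniteMeasure (μ j))
    (hμ : ∀ j < n, ∀ᵐ x ∂μ j, 0 ≤ x) (hy : 0 < y) (hyz : y ≤ z)
    (hnull : ∀ j < n, μ j (Ioc y z) = 0) :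
    expCost n r b μ z / z ≤ expCost n r b μ y / y := by
  simp only [expCost, Finset.sum_div]
  refine Finset.sum_le_sum fun j hj => ?_
  have hjn := Finset.mem_range.mp hj
  have := hfin j hjn
  exact integral_msrCost_div_le (hr j hjn) (hb j hjn) (hμ j hjn) hy hyz (hnull j hjn)

theorem lamGap_lt_lamGap_iff {n : ℕ} {r b : ℕ → ℝ} {B : ℝ} {μ : ℕ → Measure ℝ} {y z : ℝ}
    (hr0 : 0 < r 0) :
    lamGap n r b B μ z < lamGap n r b B μ y ↔ expCost n r b μ y / y < expCost n r b μ z / z := by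
  rw [lamGap, lamGap, sub_lt_sub_iff_left, div_mul_eq_div_div_swap, div_mul_eq_div_div_swap,
    div_lt_div_iff_of_pos_right hr0]

theorem IsMixed.ae_nonneg {n : ℕ} {B : ℝ} {μ : ℕ → Measure ℝ} (hμ : IsMixed n B μ) (j : ℕ) :
    ∀ᵐ x ∂μ j, 0 ≤ x := by
  have hIcc : ∀ᵐ x ∂μ j, x ∈ Icc 0 B := mem_ae_iff.mpr (hμ.2.1 j)
  exact hIcc.mono fun _ hx => hx.1

theorem apply_zero_le_of_forall_le_add_one {α : Type*} [Preorder α] {n : ℕ} {f : ℕ → α}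
    (hf : ∀ j, j + 1 < n → f j ≤ f (j + 1)) {j : ℕ} (hj : j < n) : f 0 ≤ f j :=
  (monotoneOn_of_le_add_one ordConnected_Iio fun i _ _ hi => hf i hi)
    (mem_Iio.mpr (j.zero_le.trans_lt hj)) hj j.zero_le

theorem apply_pred_le_of_forall_add_one_le {α : Type*} [Preorder α] {n : ℕ} {f : ℕ → α}
    (hf : ∀ j, j + 1 < n → f (j + 1) ≤ f j) {j : ℕ} (hj : j < n) : f (n - 1) ≤ f j :=
  (antitoneOn_of_add_one_le ordConnected_Iio fun i _ _ hi => hf i hi)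
    hj (mem_Iio.mpr (Nat.sub_one_lt_of_lt hj)) (Nat.le_sub_one_of_lt hj)

theorem msr_gap_forces_mass_left_general {n : ℕ} {r b : ℕ → ℝ} {B : ℝ} {μ : ℕ → Measure ℝ}
    {y z : ℝ} (hr0 : 0 < r 0) (hr : ∀ j < n, 0 ≤ r j) (hb : ∀ j < n, 0 ≤ b j)
    (hfin : ∀ j < n, IsFiniteMeasure (μ j)) (hμ : ∀ j < n, ∀ᵐ x ∂μ j, 0 ≤ x)
    (hy : 0 < y) (hyz : y ≤ z) (hgap : lamGap n r b B μ z < lamGap n r b B μ y) :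
    ∃ j < n, 0 < μ j (Ioc y z) := by
  by_contra! hnull
  exact ((lamGap_lt_lamGap_iff hr0).mp hgap).not_ge
    (expCost_div_le hr hb hfin hμ hy hyz fun j hj => nonpos_iff_eq_zero.mp (hnull j hj))

/-- if the gap `lamGap` is strictly larger than `lamGap y0` throughout
`(y0 - δ, y0)`, then some shop carries positive probability on `(y0 - δ, y0]`. -/
theorem msr_gap_forces_mass_left
    (n : ℕ) (hn : 0 < n) (r b : ℕ → ℝ)
    (hr0 : 0 < r 0)
    (hrmono : ∀ j, j + 1 < n → r j < r (j + 1))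
    (hbmono : ∀ j, j + 1 < n → b (j + 1) < b j)
    (hbn : 0 < b (n - 1))
    (B : ℝ) (hB : B = b (n - 1) / r 0)
    (μ : ℕ → Measure ℝ) (hμ : IsMixed n B μ)
    (y0 δ : ℝ) (hy0 : y0 ∈ Set.Ioc (0 : ℝ) B) (hδ0 : 0 < δ) (hδ : δ < y0)
    (h : ∀ y ∈ Set.Ioo (y0 - δ) y0, lamGap n r b B μ y0 < lamGap n r b B μ y) :
    ∃ j < n, 0 < μ j (Set.Ioc (y0 - δ) y0) := by
  have hr : ∀ j < n, 0 ≤ r j := fun j hj =>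
    hr0.le.trans (apply_zero_le_of_forall_le_add_one (fun i hi => (hrmono i hi).le) hj)
  have hb : ∀ j < n, 0 ≤ b j := fun j hj =>
    hbn.le.trans (apply_pred_le_of_forall_add_one_le (fun i hi => (hbmono i hi).le) hj)
  obtain ⟨y, hδy, hyy0⟩ := exists_between (sub_lt_self y0 hδ0)
  obtain ⟨j, hj, hmass⟩ := msr_gap_forces_mass_left_general hr0 hr hb (fun j _ => hμ.1 j)
    (fun j _ => hμ.ae_nonneg j) ((sub_pos.mpr hδ).trans hδy) hyy0.le (h y ⟨hδy, hyy0⟩)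
  exact ⟨j, hj, hmass.trans_le (measure_mono (Ioc_subset_Ioc_left hδy.le))⟩
end

section
/- Let T > 0, let f, g : ℝ → ℝ be measurable functions with 0 ≤ f(t) ≤ T and 0 ≤ g(t) ≤ T for all t, let x, x' ∈ ℝ and ε > 0, and suppose ∫_{x−ε}^{x} f(t) dt > 0 and ∫_{x'}^{x'+ε} g(t) dt > 0. Then there exist x_1, x_2 ∈ ℝ and ε_0 > 0 such that (x_1, x_1+ε_0) ⊆ (x−ε, x), (x_2, x_2+ε_0) ⊆ (x', x'+ε), and ∫_0^{ε_0} min{ f(x_1+θ), g(x_2+θ) } dθ > 0. -/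
/-!
Lebesgue's differentiation theorem provides right Lebesgue points `c` of `f` and `d` of `g` inside
the two intervals with `f c > 0` and `g d > 0`. As
`|min u v - min u₀ v₀| ≤ |u - u₀| + |v - v₀|`, the origin is a right Lebesgue point of
`θ ↦ min (f (c + θ)) (g (d + θ))`, so the average of this function over `(0, ε₀)` tends to
`min (f c) (g d) > 0` as `ε₀ → 0⁺`.
-/

open MeasureTheory Set Filter Asymptotics

open scoped Topology

/-- `x` is a right Lebesgue point of `f : ℝ → E`: the mean of `‖f t - f x‖` over `x < t < y` tends
to zero as `y` decreases to `x`. Integrability near `x` is required separately because the integral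
of a non-integrable function is zero by convention. -/
structure IsRightLebesguePoint {E : Type*} [NormedAddCommGroup E] (f : ℝ → E) (x : ℝ) : Prop where
  eventually_intervalIntegrable : ∀ᶠ y in 𝓝[>] x, IntervalIntegrable f volume x y
  isLittleO : (fun y ↦ ∫ t in x..y, ‖f t - f x‖) =o[𝓝[>] x] fun y ↦ y - x

namespace IsRightLebesguePoint

variable {E : Type*} [NormedAddCommGroup E] {f g : ℝ → E} {x : ℝ}

theorem congr (hf : IsRightLebesguePoint f x) (hfg : f =ᶠ[𝓝[≥] x] g) :
    IsRightLebesguePoint g x := by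
  obtain ⟨u, hxu, hu⟩ := mem_nhdsGE_iff_exists_Icc_subset.1 hfg
  have hEq : ∀ᶠ y in 𝓝[>] x, EqOn f g (uIcc x y) := by
    filter_upwards [Ioc_mem_nhdsGT hxu] with y hy
    rw [uIcc_of_le hy.1.le]
    exact fun t ht ↦ hu ⟨ht.1, ht.2.trans hy.2⟩
  refine ⟨?_, hf.isLittleO.congr' ?_ .rfl⟩
  · filter_upwards [hf.eventually_intervalIntegrable, hEq] with y hy hfg
    exact hy.congr (hfg.mono uIoc_subset_uIcc)
  · filter_upwards [hEq] with y hfg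
    refine intervalIntegral.integral_congr fun t ht ↦ ?_
    simp only [hfg ht, hfg left_mem_uIcc]

theorem comp_const_add {c : ℝ} (hf : IsRightLebesguePoint f (c + x)) :
    IsRightLebesguePoint (fun t ↦ f (c + t)) x := by
  have hc : Tendsto (c + ·) (𝓝[>] x) (𝓝[>] (c + x)) :=
    (continuous_const_add c).continuousWithinAt.tendsto_nhdsWithin fun _ hy ↦
      add_lt_add_right (mem_Ioi.1 hy) c
  refine ⟨?_, ?_⟩
  · filter_upwards [hc.eventually hf.eventually_intervalIntegrable] with y hy
    simpa only [add_sub_cancel_left] using hy.comp_add_left c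
  · refine (hf.isLittleO.comp_tendsto hc).congr (fun y ↦ ?_) fun y ↦ add_sub_add_left_eq_sub y x c
    exact (intervalIntegral.integral_comp_add_left (fun t ↦ ‖f t - f (c + x)‖) c).symm

theorem inf [Lattice E] [HasSolidNorm E] [IsOrderedAddMonoid E]
    (hf : IsRightLebesguePoint f x) (hg : IsRightLebesguePoint g x) :
    IsRightLebesguePoint (fun t ↦ f t ⊓ g t) x := by
  have hint : ∀ᶠ y in 𝓝[>] x, IntervalIntegrable (fun t ↦ f t ⊓ g t) volume x y := by
    filter_upwards [hf.eventually_intervalIntegrable, hg.eventually_intervalIntegrable]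
      with y hfy hgy using ⟨hfy.1.inf hgy.1, hfy.2.inf hgy.2⟩
  refine ⟨hint, (IsBigO.of_norm_eventuallyLE ?_).trans_isLittleO (hf.isLittleO.add hg.isLittleO)⟩
  filter_upwards [self_mem_nhdsWithin, hint, hf.eventually_intervalIntegrable,
    hg.eventually_intervalIntegrable] with y (hxy : x < y) hinf hfy hgy
  have hf_dev := (hfy.sub (intervalIntegrable_const (c := f x))).norm
  have hg_dev := (hgy.sub (intervalIntegrable_const (c := g x))).norm
  have hinf_dev := (hinf.sub (intervalIntegrable_const (c := f x ⊓ g x))).norm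
  rw [Real.norm_of_nonneg (intervalIntegral.integral_nonneg hxy.le fun _ _ ↦ norm_nonneg _),
    ← intervalIntegral.integral_add hf_dev hg_dev]
  exact intervalIntegral.integral_mono hxy.le hinf_dev (hf_dev.add hg_dev) fun t ↦
    norm_inf_sub_inf_le_add_norm (f t) (g t) (f x) (g x)

theorem eventually_integral_pos {f : ℝ → ℝ} (hf : IsRightLebesguePoint f x) (hx : 0 < f x) :
    ∀ᶠ y in 𝓝[>] x, 0 < ∫ t in x..y, f t := by
  filter_upwards [self_mem_nhdsWithin, hf.eventually_intervalIntegrable,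
    hf.isLittleO.bound (half_pos hx)] with y (hxy : x < y) hint hbound
  have hdev : ‖∫ t in x..y, (f t - f x)‖ ≤ f x / 2 * (y - x) :=
    calc ‖∫ t in x..y, (f t - f x)‖
      _ ≤ ∫ t in x..y, ‖f t - f x‖ := intervalIntegral.norm_integral_le_integral_norm hxy.le
      _ ≤ f x / 2 * ‖y - x‖ := (Real.le_norm_self _).trans hbound
      _ = f x / 2 * (y - x) := by rw [Real.norm_of_nonneg (sub_nonneg.2 hxy.le)]
  rw [intervalIntegral.integral_sub hint intervalIntegrable_const,
    intervalIntegral.integral_const, smul_eq_mul] at hdev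
  have hmean : 0 < f x / 2 * (y - x) := mul_pos (half_pos hx) (sub_pos.2 hxy)
  linarith [(abs_le.1 hdev).1]

end IsRightLebesguePoint

section Differentiation

variable {E : Type*} [NormedAddCommGroup E] {f : ℝ → E}

theorem ae_isRightLebesguePoint_of_locallyIntegrable (hf : LocallyIntegrable f) :
    ∀ᵐ x, IsRightLebesguePoint f x := by
  filter_upwards [(IsUnifLocDoublingMeasure.vitaliFamily volume 1).ae_tendsto_average_norm_sub hf]
    with x hx
  refine ⟨.of_forall fun y ↦ (hf.integrableOn_isCompact isCompact_uIcc).intervalIntegrable, ?_⟩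
  have hne : ∀ᶠ y in 𝓝[>] x, y - x = 0 → ∫ t in x..y, ‖f t - f x‖ = 0 := by
    filter_upwards [self_mem_nhdsWithin] with y (hxy : x < y) h
    exact absurd h (sub_pos.2 hxy).ne'
  refine (isLittleO_iff_tendsto' hne).2 ((hx.comp x.tendsto_Icc_vitaliFamily_right).congr' ?_)
  filter_upwards [self_mem_nhdsWithin] with y (hxy : x < y)
  rw [Function.comp_apply, setAverage_eq, integral_Icc_eq_integral_Ioc,
    ← intervalIntegral.integral_of_le hxy.le, Real.volume_real_Icc_of_le hxy.le, smul_eq_mul,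
    inv_mul_eq_div]

theorem ae_restrict_isRightLebesguePoint_of_integrableOn {U : Set ℝ} (hU : IsOpen U)
    (hf : IntegrableOn f U) : ∀ᵐ x ∂volume.restrict U, IsRightLebesguePoint f x := by
  have hloc : LocallyIntegrable (U.indicator f) :=
    (hf.integrable_indicator hU.measurableSet).locallyIntegrable
  filter_upwards [ae_restrict_of_ae (ae_isRightLebesguePoint_of_locallyIntegrable hloc),
    ae_restrict_mem hU.measurableSet] with x hx hxU
  exact hx.congr <| (eqOn_indicator.eventuallyEq_of_mem (hU.mem_nhds hxU)).filter_mono inf_le_left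

theorem exists_isRightLebesguePoint_pos_of_integral_pos {f : ℝ → ℝ} {a b : ℝ} (hab : a ≤ b)
    (hpos : 0 < ∫ t in a..b, f t) : ∃ x ∈ Ioo a b, IsRightLebesguePoint f x ∧ 0 < f x := by
  rw [intervalIntegral.integral_of_le hab, integral_Ioc_eq_integral_Ioo] at hpos
  have hf : IntegrableOn f (Ioo a b) := .of_integral_ne_zero hpos.ne'
  have hfreq : ∃ᵐ x ∂volume.restrict (Ioo a b), 0 < f x := fun hnonpos ↦
    hpos.not_ge (integral_nonpos_of_ae (hnonpos.mono fun _ ↦ not_lt.1))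
  obtain ⟨x, hfx, hx, hxab⟩ := (hfreq.and_eventually <|
    (ae_restrict_isRightLebesguePoint_of_integrableOn isOpen_Ioo hf).and
      (ae_restrict_mem measurableSet_Ioo)).exists
  exact ⟨x, hxab, hx, hfx⟩

end Differentiation

theorem overlap_of_pos_integrals_general {f g : ℝ → ℝ} {a b a' b' : ℝ} (hab : a ≤ b)
    (hab' : a' ≤ b') (hfI : 0 < ∫ t in a..b, f t) (hgI : 0 < ∫ t in a'..b', g t) :
    ∃ x1 x2 ε0 : ℝ, 0 < ε0 ∧ Ioo x1 (x1 + ε0) ⊆ Ioo a b ∧ Ioo x2 (x2 + ε0) ⊆ Ioo a' b' ∧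
      0 < ∫ θ in (0 : ℝ)..ε0, min (f (x1 + θ)) (g (x2 + θ)) := by
  obtain ⟨c, hc, hfc, hfc_pos⟩ := exists_isRightLebesguePoint_pos_of_integral_pos hab hfI
  obtain ⟨d, hd, hgd, hgd_pos⟩ := exists_isRightLebesguePoint_pos_of_integral_pos hab' hgI
  have hmin : IsRightLebesguePoint (fun θ ↦ min (f (c + θ)) (g (d + θ))) 0 :=
    .inf (.comp_const_add (by rwa [add_zero])) (.comp_const_add (by rwa [add_zero]))
  have hmin_pos : 0 < min (f (c + 0)) (g (d + 0)) := by simp only [add_zero, lt_min hfc_pos hgd_pos]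
  obtain ⟨ε0, hint, hε0, hε0c⟩ := ((hmin.eventually_integral_pos hmin_pos).and
    (Ioc_mem_nhdsGT (lt_min (sub_pos.2 hc.2) (sub_pos.2 hd.2)))).exists
  have hcb : c + ε0 ≤ b := by linarith [min_le_left (b - c) (b' - d)]
  have hdb : d + ε0 ≤ b' := by linarith [min_le_right (b - c) (b' - d)]
  exact ⟨c, d, ε0, hε0, Ioo_subset_Ioo hc.1.le hcb, Ioo_subset_Ioo hd.1.le hdb, hint⟩

/-- overlap lemma. From two bounded nonnegative measurable functions
with positive integral over two given intervals, one can extract two translated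
subintervals of equal length on which the pointwise minimum of the correspondingly
shifted functions has positive integral. -/
theorem overlap_of_pos_integrals
    (T : ℝ) (hT : 0 < T) (f g : ℝ → ℝ)
    (hfm : Measurable f) (hgm : Measurable g)
    (hf0 : ∀ t, 0 ≤ f t) (hfT : ∀ t, f t ≤ T)
    (hg0 : ∀ t, 0 ≤ g t) (hgT : ∀ t, g t ≤ T)
    (x x' ε : ℝ) (hε : 0 < ε)
    (hfI : 0 < ∫ t in (x - ε)..x, f t)
    (hgI : 0 < ∫ t in x'..(x' + ε), g t) :
    ∃ x1 x2 ε0 : ℝ, 0 < ε0 ∧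
      Set.Ioo x1 (x1 + ε0) ⊆ Set.Ioo (x - ε) x ∧
      Set.Ioo x2 (x2 + ε0) ⊆ Set.Ioo x' (x' + ε) ∧
      0 < ∫ θ in (0:ℝ)..ε0, min (f (x1 + θ)) (g (x2 + θ)) :=
  overlap_of_pos_integrals_general (by linarith) (by linarith) hfI hgI
end

section
/- Single-shop ski rental with entry fee a ≥ 0, renting rate 1 and buying price b > 0: let p_0 = a/((a+b)·e − b) and p(x) = e^{x/b} / ( b·(e − b/(a+b)) ) for x ∈ (0,b]. Then (i) p_0 + ∫_0^b p(x) dx = 1, and (ii) for every y ∈ (0,b], the expected cost C(y) = p_0·(a+b) + ∫_0^y (a + x + b)·p(x) dx + ∫_y^b (a + y)·p(x) dx satisfies C(y)/(a+y) = e/(e − b/(a+b)); i.e. this mixed strategy achieves the constant competitive ratio e/(e − b/(a+b)). -/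
/-!
Stopping one instant later than `y` costs `b * p y` more if the consumer buys at `y` and one unit of
rent if the purchase is still to come, so the marginal cost is `b * p y + ∫ x in y..b, p x`.
For `p x = c * exp (x / b)` we have `p = b * p'`, so this is the constant `b * c * e`, and the
expected cost is affine in `y`. It is then a multiple of `a + y` as soon as its value `a + b * p₀`
at `y = 0` is `a` times the slope; together with total mass `1` this forces `p₀` and `c`.
-/

open Real

/-- The expected cost against stopping time `y` of the mixed strategy that buys at time `0` with
probability `p₀` and at time `x ∈ (0, b]` with density `p`, for entry fee `a`, renting rate `1`
and buying price `b`. -/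
noncomputable def skiRentalCost (a b p₀ : ℝ) (p : ℝ → ℝ) (y : ℝ) : ℝ :=
  p₀ * (a + b) + (∫ x in (0 : ℝ)..y, (a + x + b) * p x) + ∫ x in y..b, (a + y) * p x

/-- The probability with which the equalizing strategy, whose expected cost is proportional to the
offline optimum `a + y`, buys at time `0`. -/
noncomputable def skiRentalMass (a b : ℝ) : ℝ :=
  a / ((a + b) * exp 1 - b)

/-- The density of the equalizing strategy's buying time on `(0, b]`, extended to all of `ℝ` by the
same formula. -/
noncomputable def skiRentalDensity (a b x : ℝ) : ℝ :=
  exp (x / b) / (b * (exp 1 - b / (a + b)))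

/-- The competitive ratio of the equalizing strategy. -/
noncomputable def skiRentalRatio (a b : ℝ) : ℝ :=
  exp 1 / (exp 1 - b / (a + b))

section ExponentialDensity

variable {b : ℝ}

lemma integral_exp_div (hb : b ≠ 0) (u v : ℝ) :
    ∫ x in u..v, exp (x / b) = b * (exp (v / b) - exp (u / b)) := by
  rw [intervalIntegral.integral_comp_div _ hb, integral_exp, smul_eq_mul]

lemma integral_add_add_mul_exp_div (hb : b ≠ 0) (a u v : ℝ) :
    ∫ x in u..v, (a + x + b) * exp (x / b) =
      b * ((a + v) * exp (v / b) - (a + u) * exp (u / b)) := by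
  have antideriv (x : ℝ) :
      HasDerivAt (fun x ↦ b * ((a + x) * exp (x / b))) ((a + x + b) * exp (x / b)) x := by
    have exp_deriv := ((hasDerivAt_id' x).div_const b).exp
    refine ((((hasDerivAt_id' x).const_add a).mul exp_deriv).const_mul b).congr_deriv ?_
    field_simp
    ring
  rw [intervalIntegral.integral_eq_sub_of_hasDerivAt (fun x _ ↦ antideriv x)
    (Continuous.intervalIntegrable (by fun_prop) u v)]
  ring

lemma skiRentalCost_const_mul_exp_div (hb : b ≠ 0) (a p₀ c y : ℝ) :
    skiRentalCost a b p₀ (fun x ↦ c * exp (x / b)) y =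
      a * (p₀ + ∫ x in (0 : ℝ)..b, c * exp (x / b)) + b * p₀ + b * c * exp 1 * y := by
  simp only [skiRentalCost, mul_left_comm _ c, intervalIntegral.integral_const_mul,
    integral_exp_div hb, integral_add_add_mul_exp_div hb, div_self hb, zero_div, exp_zero]
  ring

end ExponentialDensity

section EqualizingStrategy

variable {a b : ℝ}

lemma skiRentalDensity_eq_const_mul_exp_div (a b : ℝ) :
    skiRentalDensity a b = fun x ↦ (b * (exp 1 - b / (a + b)))⁻¹ * exp (x / b) := by
  funext x
  rw [skiRentalDensity, div_eq_inv_mul]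

lemma exp_one_sub_div_add (hab : a + b ≠ 0) :
    exp 1 - b / (a + b) = ((a + b) * exp 1 - b) / (a + b) := by
  field_simp

lemma skiRentalMass_add_integral_skiRentalDensity (hb : b ≠ 0) (hab : a + b ≠ 0)
    (he : (a + b) * exp 1 - b ≠ 0) :
    skiRentalMass a b + ∫ x in (0 : ℝ)..b, skiRentalDensity a b x = 1 := by
  simp only [skiRentalDensity_eq_const_mul_exp_div, intervalIntegral.integral_const_mul,
    integral_exp_div hb, div_self hb, zero_div, exp_zero, skiRentalMass, exp_one_sub_div_add hab]
  field_simp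
  ring

lemma add_mul_skiRentalMass (hab : a + b ≠ 0) (he : (a + b) * exp 1 - b ≠ 0) :
    a + b * skiRentalMass a b = a * skiRentalRatio a b := by
  rw [skiRentalMass, skiRentalRatio, exp_one_sub_div_add hab]
  field_simp
  ring

lemma skiRentalCost_skiRentalDensity (hb : b ≠ 0) (hab : a + b ≠ 0)
    (he : (a + b) * exp 1 - b ≠ 0) (y : ℝ) :
    skiRentalCost a b (skiRentalMass a b) (skiRentalDensity a b) y =
      skiRentalRatio a b * (a + y) := by
  have total_mass := skiRentalMass_add_integral_skiRentalDensity hb hab he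
  have slope : b * (b * (exp 1 - b / (a + b)))⁻¹ * exp 1 = skiRentalRatio a b := by
    rw [mul_inv, mul_inv_cancel_left₀ hb, inv_mul_eq_div, skiRentalRatio]
  rw [skiRentalDensity_eq_const_mul_exp_div] at total_mass ⊢
  calc
    _ = a + b * skiRentalMass a b + skiRentalRatio a b * y := by
      rw [skiRentalCost_const_mul_exp_div hb, total_mass, mul_one, slope]
    _ = skiRentalRatio a b * (a + y) := by
      rw [add_mul_skiRentalMass hab he]
      ring

lemma add_mul_exp_one_sub_pos (ha : 0 ≤ a) (hb : 0 < b) : 0 < (a + b) * exp 1 - b := by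
  have : a + b < (a + b) * exp 1 :=
    lt_mul_of_one_lt_right (by positivity) (one_lt_exp_iff.mpr one_pos)
  linarith

end EqualizingStrategy

theorem single_shop_entry_fee_ratio_general {a b : ℝ} (hb : b ≠ 0) (hab : a + b ≠ 0)
    (he : (a + b) * exp 1 - b ≠ 0) :
    skiRentalMass a b + (∫ x in (0 : ℝ)..b, skiRentalDensity a b x) = 1 ∧
    ∀ y, a + y ≠ 0 →
      skiRentalCost a b (skiRentalMass a b) (skiRentalDensity a b) y / (a + y) =
        skiRentalRatio a b :=
  ⟨skiRentalMass_add_integral_skiRentalDensity hb hab he, fun y hy ↦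
    (div_eq_iff hy).mpr (skiRentalCost_skiRentalDensity hb hab he y)⟩

/-- single-shop ski rental with entry fee `a ≥ 0`, renting rate `1`
and buying price `b > 0`. The mixed strategy with probability mass
`p₀ = a/((a+b)·e − b)` of buying at time `0` and density
`p(x) = exp(x/b)/(b·(e − b/(a+b)))` on `(0, b]` is a probability distribution and
achieves the constant competitive ratio `e/(e − b/(a+b))`. -/
theorem single_shop_entry_fee_ratio
    (a b : ℝ) (ha : 0 ≤ a) (hb : 0 < b)
    (p0 : ℝ) (hp0 : p0 = a / ((a + b) * Real.exp 1 - b))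
    (p : ℝ → ℝ) (hp : ∀ x, p x = Real.exp (x / b) / (b * (Real.exp 1 - b / (a + b)))) :
    p0 + (∫ x in (0:ℝ)..b, p x) = 1 ∧
    ∀ y ∈ Set.Ioc (0:ℝ) b,
      (p0 * (a + b) + (∫ x in (0:ℝ)..y, (a + x + b) * p x)
          + ∫ x in y..b, (a + y) * p x) / (a + y)
        = Real.exp 1 / (Real.exp 1 - b / (a + b)) := by
  obtain ⟨rfl, rfl⟩ : p0 = skiRentalMass a b ∧ p = skiRentalDensity a b := ⟨hp0, funext hp⟩
  exact (single_shop_entry_fee_ratio_general hb.ne' (add_pos_of_nonneg_of_pos ha hb).ne'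
    (add_mul_exp_one_sub_pos ha hb).ne').imp_right
      fun cost_ratio y hy ↦ cost_ratio y (add_pos_of_nonneg_of_pos ha hy.1).ne'
end

section
/- In the MSR-S setting, any strategy which includes switching from one shop to another and continuing renting is dominated: for every pure action ψ with k ≥ 2 shops whose last switching time x_{k−1} is strictly smaller than its buying time x, there exists a pure action ψ' with the same buying time x in which every switching time (if any) equals x, such that cost(ψ', y) ≤ cost(ψ, y) for every stopping time y > 0. -/
/-- A pure action in MSR-S / MSR-ES, given by `k ≥ 1` shops `j 0, …, j (k-1)`,
switching times `x 1 ≤ ⋯ ≤ x (k-1)` (with `x 0 = 0`), and buying time `x k`: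
the consumer rents in shop `j t` during `[x t, x (t+1))` and buys in shop
`j (k-1)` at time `x k`. -/
def ValidAction (n k : ℕ) (j : ℕ → ℕ) (x : ℕ → ℝ) : Prop :=
  1 ≤ k ∧ (∀ t < k, j t < n) ∧ x 0 = 0 ∧ (∀ t < k, x t ≤ x (t + 1))

/-- Cost of the pure action `(k, j, x)` in MSR-S against stopping time `y`:
switching costs incurred at times `x t ≤ y`, renting charges up to time `y`,
and the buying price if `y ≥ x k`. -/
noncomputable def msrsCost (r b : ℕ → ℝ) (c : ℕ → ℕ → ℝ) (k : ℕ)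
    (j : ℕ → ℕ) (x : ℕ → ℝ) (y : ℝ) : ℝ :=
  (∑ t ∈ Finset.Ico 1 k, if x t ≤ y then c (j (t - 1)) (j t) else 0)
    + (∑ t ∈ Finset.range k, r (j t) * (min y (x (t + 1)) - min y (x t)))
    + (if x k ≤ y then b (j (k - 1)) else 0)

/-!
Let `m` be a period in which the action pays its lowest renting rate. Going straight to the shop of
period `m`, renting there until the buying time, and only then making the switches that the action
makes after period `m` dominates it: the renting rate is never higher at any time, the switches
that remain are a part of the original ones and are paid no earlier, and the purchase is unchanged.
-/

namespace ValidAction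

variable {n k : ℕ} {j : ℕ → ℕ} {x : ℕ → ℝ}

lemma monotoneOn_times (h : ValidAction n k j x) : MonotoneOn x (Set.Iic k) :=
  monotoneOn_of_le_add_one Set.ordConnected_Iic fun t _ _ ht => h.2.2.2 t ht

lemma time_le_buyingTime (h : ValidAction n k j x) {t : ℕ} (ht : t ≤ k) : x t ≤ x k :=
  h.monotoneOn_times ht Set.self_mem_Iic ht

lemma buyingTime_nonneg (h : ValidAction n k j x) : 0 ≤ x k :=
  h.2.2.1 ▸ h.time_le_buyingTime k.zero_le

end ValidAction

namespace MSRS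

section CostComponents

variable {ι : Type*}

/-- The part of the cost of an action in MSR-S that is paid for switching up to time `y`. -/
noncomputable def switchingCost (c : ι → ι → ℝ) (k : ℕ) (j : ℕ → ι) (x : ℕ → ℝ) (y : ℝ) : ℝ :=
  ∑ t ∈ Finset.Ico 1 k, if x t ≤ y then c (j (t - 1)) (j t) else 0

/-- The part of the cost of an action in MSR-S that is paid for renting up to time `y`. -/
noncomputable def rentingCost (r : ι → ℝ) (k : ℕ) (j : ℕ → ι) (x : ℕ → ℝ) (y : ℝ) : ℝ :=
  ∑ t ∈ Finset.range k, r (j t) * (min y (x (t + 1)) - min y (x t))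

/-- The part of the cost of an action in MSR-S that is paid for buying up to time `y`. -/
noncomputable def purchaseCost (b : ι → ℝ) (k : ℕ) (j : ℕ → ι) (x : ℕ → ℝ) (y : ℝ) : ℝ :=
  if x k ≤ y then b (j (k - 1)) else 0

/-- The times of an action that rents in its first shop until time `X`, makes all its switches at
time `X`, and buys at time `X`. Since no index marks the end of the sequence, it can be used with
any number of shops. -/
def deferredTimes (X : ℝ) : ℕ → ℝ
  | 0 => 0
  | _ + 1 => X

lemma deferredTimes_of_pos (X : ℝ) {t : ℕ} (ht : 0 < t) : deferredTimes X t = X := by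
  cases t with
  | zero => contradiction
  | succ t => rfl

lemma deferredTimes_le_succ {X : ℝ} (hX : 0 ≤ X) (t : ℕ) :
    deferredTimes X t ≤ deferredTimes X (t + 1) := by
  cases t with
  | zero => exact hX
  | succ t => exact le_rfl

section Switching

variable {c : ι → ι → ℝ}

lemma switchingCost_le_of_times_le (hc : ∀ i i', 0 ≤ c i i') {k : ℕ} (j : ℕ → ι) {x x' : ℕ → ℝ}
    (hx : ∀ t ∈ Finset.Ico 1 k, x t ≤ x' t) (y : ℝ) :
    switchingCost c k j x' y ≤ switchingCost c k j x y := by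
  refine Finset.sum_le_sum fun t ht => ?_
  by_cases hy : x' t ≤ y
  · rw [if_pos hy, if_pos ((hx t ht).trans hy)]
  · rw [if_neg hy]
    exact ite_nonneg (hc _ _) le_rfl

lemma switchingCost_suffix_le (hc : ∀ i i', 0 ≤ c i i') (m l : ℕ) (j : ℕ → ι) (x : ℕ → ℝ)
    (y : ℝ) :
    switchingCost c l (fun t => j (m + t)) (fun t => x (m + t)) y ≤
      switchingCost c (m + l) j x y := by
  let f : ℕ → ℝ := fun t => if x t ≤ y then c (j (t - 1)) (j t) else 0
  calc
    switchingCost c l (fun t => j (m + t)) (fun t => x (m + t)) y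
        = ∑ t ∈ Finset.Ico 1 l, f (m + t) :=
      Finset.sum_congr rfl fun t ht => by
        simp only [f, Nat.add_sub_assoc (Finset.mem_Ico.1 ht).1]
    _ = ∑ t ∈ Finset.Ico (1 + m) (l + m), f t := Finset.sum_Ico_add f 1 l m
    _ ≤ ∑ t ∈ Finset.Ico 1 (m + l), f t :=
      Finset.sum_le_sum_of_subset_of_nonneg
        (Finset.Ico_subset_Ico (Nat.le_add_right 1 m) (Nat.add_comm l m).le)
        fun _ _ _ => ite_nonneg (hc _ _) le_rfl

lemma switchingCost_suffix_deferredTimes_le (hc : ∀ i i', 0 ≤ c i i') {m l : ℕ} (j : ℕ → ι)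
    {x : ℕ → ℝ} {X : ℝ} (hx : ∀ t < m + l, x t ≤ X) (y : ℝ) :
    switchingCost c l (fun t => j (m + t)) (deferredTimes X) y ≤
      switchingCost c (m + l) j x y := by
  refine (switchingCost_le_of_times_le hc _ (fun t ht => ?_) y).trans
    (switchingCost_suffix_le hc m l j x y)
  obtain ⟨hpos, hlt⟩ := Finset.mem_Ico.1 ht
  rw [deferredTimes_of_pos X hpos]
  exact hx _ (Nat.add_lt_add_left hlt m)

end Switching

section Renting

variable (r : ι → ℝ)

lemma rentingCost_deferredTimes {k : ℕ} (hk : 0 < k) (j : ℕ → ι) (X y : ℝ) :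
    rentingCost r k j (deferredTimes X) y = r (j 0) * (min y X - min y 0) := by
  refine Finset.sum_eq_single_of_mem 0 (Finset.mem_range.2 hk) fun t _ ht => ?_
  rw [deferredTimes_of_pos X t.succ_pos, deferredTimes_of_pos X (Nat.pos_of_ne_zero ht), sub_self,
    mul_zero]

lemma mul_le_rentingCost {k : ℕ} {j : ℕ → ι} {x : ℕ → ℝ} {ρ : ℝ} (hρ : ∀ t < k, ρ ≤ r (j t))
    (hx : ∀ t < k, x t ≤ x (t + 1)) (y : ℝ) :
    ρ * (min y (x k) - min y (x 0)) ≤ rentingCost r k j x y := by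
  rw [← Finset.sum_range_sub (fun t => min y (x t)) k, Finset.mul_sum]
  refine Finset.sum_le_sum fun t ht => ?_
  have htk : t < k := Finset.mem_range.1 ht
  exact mul_le_mul_of_nonneg_right (hρ t htk) (sub_nonneg.2 (min_le_min_left y (hx t htk)))

end Renting

lemma purchaseCost_suffix_deferredTimes (b : ι → ℝ) (m : ℕ) {l : ℕ} (hl : 0 < l) (j : ℕ → ι)
    (x : ℕ → ℝ) (y : ℝ) :
    purchaseCost b l (fun t => j (m + t)) (deferredTimes (x (m + l))) y =
      purchaseCost b (m + l) j x y := by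
  simp only [purchaseCost, deferredTimes_of_pos _ hl, Nat.add_sub_assoc hl]

end CostComponents

lemma msrsCost_eq_add (r b : ℕ → ℝ) (c : ℕ → ℕ → ℝ) (k : ℕ) (j : ℕ → ℕ) (x : ℕ → ℝ) (y : ℝ) :
    msrsCost r b c k j x y =
      switchingCost c k j x y + rentingCost r k j x y + purchaseCost b k j x y :=
  rfl

variable {n m l : ℕ} {j : ℕ → ℕ} {x : ℕ → ℝ}

lemma validAction_suffix_deferredTimes (hj : ∀ t < m + l, j t < n) (hl : 0 < l) {X : ℝ}
    (hX : 0 ≤ X) : ValidAction n l (fun t => j (m + t)) (deferredTimes X) :=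
  ⟨hl, fun _ ht => hj _ (Nat.add_lt_add_left ht m), rfl, fun t _ => deferredTimes_le_succ hX t⟩

lemma msrsCost_suffix_deferredTimes_le {r : ℕ → ℝ} (b : ℕ → ℝ) {c : ℕ → ℕ → ℝ}
    (hc : ∀ i i', 0 ≤ c i i') (hval : ValidAction n (m + l) j x) (hl : 0 < l)
    (hmin : ∀ t < m + l, r (j m) ≤ r (j t)) (y : ℝ) :
    msrsCost r b c l (fun t => j (m + t)) (deferredTimes (x (m + l))) y ≤
      msrsCost r b c (m + l) j x y := by
  have hswitching := switchingCost_suffix_deferredTimes_le hc j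
    (fun _ ht => hval.time_le_buyingTime (le_of_lt ht)) y
  have hrenting : rentingCost r l (fun t => j (m + t)) (deferredTimes (x (m + l))) y ≤
      rentingCost r (m + l) j x y := by
    obtain ⟨-, -, hx0, hx⟩ := hval
    rw [rentingCost_deferredTimes r hl, ← hx0]
    exact mul_le_rentingCost r hmin hx y
  have hpurchase := purchaseCost_suffix_deferredTimes b m hl j x y
  rw [msrsCost_eq_add, msrsCost_eq_add]
  exact add_le_add (add_le_add hswitching hrenting) hpurchase.le

end MSRS

open MSRS in
theorem msrs_switch_only_at_buying_time_general
    (n : ℕ) (r b : ℕ → ℝ) (c : ℕ → ℕ → ℝ) (hc : ∀ i i', 0 ≤ c i i')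
    (k : ℕ) (j : ℕ → ℕ) (x : ℕ → ℝ) (hval : ValidAction n k j x) :
    ∃ (k' : ℕ) (j' : ℕ → ℕ) (x' : ℕ → ℝ),
      ValidAction n k' j' x' ∧
      x' k' = x k ∧
      (∀ t, 1 ≤ t → t < k' → x' t = x k) ∧
      ∀ y : ℝ, msrsCost r b c k' j' x' y ≤ msrsCost r b c k j x y := by
  obtain ⟨m, hmk, hmin⟩ : ∃ m < k, ∀ t < k, r (j m) ≤ r (j t) := by
    simpa only [Finset.mem_range] using
      (Finset.range k).exists_min_image (fun t => r (j t)) ⟨0, Finset.mem_range.2 hval.1⟩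
  obtain ⟨l, hl, rfl⟩ : ∃ l, 0 < l ∧ m + l = k := exists_pos_add_of_lt' hmk
  exact ⟨l, fun t => j (m + t), deferredTimes (x (m + l)),
    validAction_suffix_deferredTimes hval.2.1 hl hval.buyingTime_nonneg,
    deferredTimes_of_pos _ hl,
    fun _ ht _ => deferredTimes_of_pos _ ht,
    msrsCost_suffix_deferredTimes_le b hc hval hl hmin⟩

/-- in MSR-S, any strategy which switches shops strictly before the
buying time is dominated by one all of whose switches (if any) occur exactly at
the buying time. -/
theorem msrs_switch_only_at_buying_time
    (n : ℕ) (hn : 0 < n) (r b : ℕ → ℝ) (c : ℕ → ℕ → ℝ)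
    (hr0 : 0 < r 0)
    (hrmono : ∀ i, i + 1 < n → r i < r (i + 1))
    (hbmono : ∀ i, i + 1 < n → b (i + 1) < b i)
    (hbn : 0 < b (n - 1))
    (hc : ∀ i i', 0 ≤ c i i')
    (k : ℕ) (j : ℕ → ℕ) (x : ℕ → ℝ)
    (hval : ValidAction n k j x) (hk : 2 ≤ k) (hswitch : x (k - 1) < x k) :
    ∃ (k' : ℕ) (j' : ℕ → ℕ) (x' : ℕ → ℝ),
      ValidAction n k' j' x' ∧
      x' k' = x k ∧
      (∀ t, 1 ≤ t → t < k' → x' t = x k) ∧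
      ∀ y : ℝ, 0 < y → msrsCost r b c k' j' x' y ≤ msrsCost r b c k j x y := by
  obtain ⟨k', j', x', hval', hx', hlast, hle⟩ :=
    msrs_switch_only_at_buying_time_general n r b c hc k j x hval
  exact ⟨k', j', x', hval', hx', hlast, fun y _ => hle y⟩
end

section
/- In the MSR-ES setting: (i) for every y ≥ B, min_{j} min( a_j + r_j·y, a_j + b_j ) = A, and for every pure action ψ and every y ≥ B, cost(ψ,y) ≤ cost(ψ,∞), where cost(ψ,∞) denotes the total cost when nature never stops (all entry fees, all renting charges up to the buying time, and the buying price); thus any strategy y ∈ [B,∞) of nature is dominated by never stopping. (ii) For every pure action ψ whose buying time x exceeds B, there exists a pure action ψ' with buying time at most B such that cost(ψ', y) ≤ cost(ψ, y) for every y with 0 < y < B, and cost(ψ',∞) ≤ cost(ψ,∞); thus any consumer action buying after time B is dominated. -/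
/-- Cost of a pure action in MSR-ES against stopping time `y`: entry fees of all
shops entered no later than `y`, renting charges up to time `y`, and the buying
price if `y ≥ x k`. -/
noncomputable def esCost (a r b : ℕ → ℝ) (k : ℕ) (j : ℕ → ℕ) (x : ℕ → ℝ) (y : ℝ) : ℝ :=
  a (j 0) + (∑ t ∈ Finset.Ico 1 k, if x t ≤ y then a (j t) else 0)
    + (∑ t ∈ Finset.range k, r (j t) * (min y (x (t + 1)) - min y (x t)))
    + (if x k ≤ y then b (j (k - 1)) else 0)

/-- Total cost of a pure action in MSR-ES when nature never stops: all entry fees,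
all renting charges up to the buying time, and the buying price. -/
noncomputable def esCostInf (a r b : ℕ → ℝ) (k : ℕ) (j : ℕ → ℕ) (x : ℕ → ℝ) : ℝ :=
  (∑ t ∈ Finset.range k, a (j t))
    + (∑ t ∈ Finset.range k, r (j t) * (x (t + 1) - x t))
    + b (j (k - 1))

/-!
Never stopping costs the consumer every fee, all the rent and the purchase, and a finite stopping
time only omits some of these. An action buying after `T` is improved by performing everything it
does after `T` at time `T` itself: nothing changes for a stopping time before `T`, and the rent
that would have accrued after `T` is saved.
-/

theorem min_sub_min_le_sub {α : Type*} [AddCommGroup α] [LinearOrder α] [IsOrderedAddMonoid α]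
    (c : α) {u v : α} (huv : u ≤ v) : min c v - min c u ≤ v - u := by
  rw [sub_le_sub_iff, ← min_add_add_right, ← min_add_add_left]
  exact min_le_min (by rw [add_comm]; gcongr) le_rfl

theorem isLeast_min_of_le {ι α : Type*} [LinearOrder α] {p : ι → Prop} {f g : ι → α} {m : α}
    (hg : IsLeast {v | ∃ i, p i ∧ v = g i} m) (hf : ∀ i, p i → m ≤ f i) :
    IsLeast {v | ∃ i, p i ∧ v = min (f i) (g i)} m := by
  obtain ⟨⟨i, hi, rfl⟩, hmin⟩ := hg
  refine ⟨⟨i, hi, (min_eq_right (hf i hi)).symm⟩, ?_⟩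
  rintro v ⟨l, hl, rfl⟩
  exact le_min (hf l hl) (hmin ⟨l, hl, rfl⟩)

/-- The truncation at time `T` of an action with times `x`: every switch or purchase planned for
later than `T` is carried out at `T`, and the shops visited stay the same. Several entries may then
take place at time `T`, which `ValidAction` allows. -/
def truncateTimes (T : ℝ) (x : ℕ → ℝ) : ℕ → ℝ := fun t ↦ min T (x t)

theorem esCost_truncateTimes_of_lt (a r b : ℕ → ℝ) (k : ℕ) (j : ℕ → ℕ) (x : ℕ → ℝ) {T y : ℝ}
    (hy : y < T) : esCost a r b k j (truncateTimes T x) y = esCost a r b k j x y := by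
  have le_iff (u : ℝ) : min T u ≤ y ↔ u ≤ y := by simp [hy.not_ge]
  have min_eq (u : ℝ) : min y (min T u) = min y u := by rw [← min_assoc, min_eq_left hy.le]
  simp only [esCost, truncateTimes, le_iff, min_eq]

namespace ValidAction

variable {n k : ℕ} {j : ℕ → ℕ} {x : ℕ → ℝ} {a r b : ℕ → ℝ}

theorem truncate (hψ : ValidAction n k j x) {T : ℝ} (hT : 0 ≤ T) :
    ValidAction n k j (truncateTimes T x) := by
  obtain ⟨hk, hj, hx₀, hx⟩ := hψ
  exact ⟨hk, hj, by simp [truncateTimes, hx₀, hT],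
    fun t ht ↦ min_le_min_left T (hx t ht)⟩

theorem sum_rent_until_le (hψ : ValidAction n k j x) (hr : ∀ i < n, 0 ≤ r i) (y : ℝ) :
    ∑ t ∈ Finset.range k, r (j t) * (min y (x (t + 1)) - min y (x t)) ≤
      ∑ t ∈ Finset.range k, r (j t) * (x (t + 1) - x t) := by
  obtain ⟨-, hj, -, hx⟩ := hψ
  refine Finset.sum_le_sum fun t ht ↦ ?_
  rw [Finset.mem_range] at ht
  exact mul_le_mul_of_nonneg_left (min_sub_min_le_sub y (hx t ht)) (hr _ (hj t ht))

theorem esCostInf_truncateTimes_le (hψ : ValidAction n k j x) (hr : ∀ i < n, 0 ≤ r i) (T : ℝ) :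
    esCostInf a r b k j (truncateTimes T x) ≤ esCostInf a r b k j x :=
  add_le_add_left (add_le_add_right (hψ.sum_rent_until_le hr T) _) _

theorem sum_entry_until_le (hψ : ValidAction n k j x) (ha : ∀ i < n, 0 ≤ a i) (y : ℝ) :
    a (j 0) + ∑ t ∈ Finset.Ico 1 k, (if x t ≤ y then a (j t) else 0) ≤
      ∑ t ∈ Finset.range k, a (j t) := by
  obtain ⟨hk, hj, -, -⟩ := hψ
  rw [Finset.sum_range_eq_add_Ico _ hk]
  gcongr with t ht
  exact (ite_le_sup _ _ _).trans (sup_le le_rfl (ha _ (hj t (Finset.mem_Ico.1 ht).2)))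

theorem esCost_le_esCostInf (hψ : ValidAction n k j x) (ha : ∀ i < n, 0 ≤ a i)
    (hr : ∀ i < n, 0 ≤ r i) (hb : ∀ i < n, 0 ≤ b i) (y : ℝ) :
    esCost a r b k j x y ≤ esCostInf a r b k j x := by
  have purchase_le : (if x k ≤ y then b (j (k - 1)) else 0) ≤ b (j (k - 1)) :=
    (ite_le_sup _ _ _).trans (sup_le le_rfl (hb _ (hψ.2.1 _ (Nat.sub_one_lt_of_lt hψ.1))))
  exact add_le_add (add_le_add (hψ.sum_entry_until_le ha y) (hψ.sum_rent_until_le hr y)) purchase_le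

end ValidAction

theorem msres_dominated_strategies_general
    (n : ℕ) (a r b : ℕ → ℝ)
    (ha : ∀ j < n, 0 ≤ a j) (hr : ∀ j < n, 0 ≤ r j) (hb : ∀ j < n, 0 ≤ b j)
    (A : ℝ) (hA : IsLeast {v : ℝ | ∃ j < n, v = a j + b j} A)
    (B : ℝ) (hB₀ : 0 ≤ B) (hB : ∀ i < n, A ≤ a i + B * r i) :
    ((∀ y : ℝ, B ≤ y →
        IsLeast {v : ℝ | ∃ j < n, v = min (a j + r j * y) (a j + b j)} A) ∧
      (∀ (k : ℕ) (j : ℕ → ℕ) (x : ℕ → ℝ), ValidAction n k j x →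
        ∀ y : ℝ, esCost a r b k j x y ≤ esCostInf a r b k j x)) ∧
    (∀ (k : ℕ) (j : ℕ → ℕ) (x : ℕ → ℝ), ValidAction n k j x →
      ∃ x' : ℕ → ℝ,
        ValidAction n k j x' ∧ x' k ≤ B ∧
        (∀ y < B, esCost a r b k j x' y = esCost a r b k j x y) ∧
        esCostInf a r b k j x' ≤ esCostInf a r b k j x) := by
  refine ⟨⟨fun y hy ↦ isLeast_min_of_le hA fun i hi ↦ ?_,
    fun k j x hψ ↦ hψ.esCost_le_esCostInf ha hr hb⟩, fun k j x hψ ↦ ?_⟩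
  · calc A ≤ a i + B * r i := hB i hi
      _ ≤ a i + r i * y := by
        rw [mul_comm]
        gcongr
        exact hr i hi
  · exact ⟨truncateTimes B x, hψ.truncate hB₀, min_le_left _ _,
      fun y hy ↦ esCost_truncateTimes_of_lt a r b k j x hy, hψ.esCostInf_truncateTimes_le hr B⟩

/-- in MSR-ES, (i) for every `y ≥ B` the offline optimum is the
constant `A` and every stopping time `y ≥ B` of nature is dominated by never
stopping; (ii) every consumer action buying after time `B` is dominated by an
action buying no later than `B`. -/
theorem msres_dominated_strategies
    (n : ℕ) (hn : 0 < n) (a r b : ℕ → ℝ)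
    (ha : ∀ j < n, 0 ≤ a j) (hr : ∀ j < n, 0 < r j) (hb : ∀ j < n, 0 < b j)
    (hrmono : ∀ i, i + 1 < n → r i ≤ r (i + 1))
    (hab : ∀ i < n, ∀ j < n, a i < a j + b j)
    (hba : ∀ i < n, ∀ j < n, b i ≤ a j + b j)
    (hdom : ∀ i j, i < j → j < n → a j < a i ∨ a j + b j < a i + b i)
    (A : ℝ) (hA : IsLeast {v : ℝ | ∃ j < n, v = a j + b j} A)
    (B : ℝ) (hB : IsLeast {t : ℝ | 0 ≤ t ∧ ∀ i < n, A ≤ a i + t * r i} B) :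
    ((∀ y : ℝ, B ≤ y →
        IsLeast {v : ℝ | ∃ j < n, v = min (a j + r j * y) (a j + b j)} A) ∧
      (∀ (k : ℕ) (j : ℕ → ℕ) (x : ℕ → ℝ), ValidAction n k j x →
        ∀ y : ℝ, B ≤ y → esCost a r b k j x y ≤ esCostInf a r b k j x)) ∧
    (∀ (k : ℕ) (j : ℕ → ℕ) (x : ℕ → ℝ), ValidAction n k j x → B < x k →
      ∃ (k' : ℕ) (j' : ℕ → ℕ) (x' : ℕ → ℝ),
        ValidAction n k' j' x' ∧ x' k' ≤ B ∧
        (∀ y : ℝ, 0 < y → y < B → esCost a r b k' j' x' y ≤ esCost a r b k j x y) ∧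
        esCostInf a r b k' j' x' ≤ esCostInf a r b k j x) := by
  obtain ⟨⟨hopt, hnever⟩, htrunc⟩ := msres_dominated_strategies_general n a r b ha
    (fun j hj ↦ (hr j hj).le) (fun j hj ↦ (hb j hj).le) A hA B hB.1.1 hB.1.2
  refine ⟨⟨hopt, fun k j x hψ y _ ↦ hnever k j x hψ y⟩, fun k j x hψ _ ↦ ?_⟩
  obtain ⟨x', hψ', hx', hcost, hinf⟩ := htrunc k j x hψ
  exact ⟨k, j, x', hψ', hx', fun y _ hy ↦ (hcost y hy).le, hinf⟩
end
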